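/- arXiv:1908.00674 — 4 statements merged into one kernel-verified Lean document; each statement's English description precedes it below -/
import Mathlib

section
/- If a graph G has girth at least 8, then G is b-continuous; that is, for every integer k with χ(G) ≤ k ≤ b(G), G admits a b-coloring with k colors. -/
open SimpleGraph

variable {V : Type*}

/-- A proper coloring of `G` using exactly the colors `0, …, k-1`. -/
def IsProperKColoring (G : SimpleGraph V) (k : ℕ) (c : V → ℕ) : Prop :=
  (∀ v, c v < k) ∧ (∀ u v, G.Adj u v → c u ≠ c v) ∧ ∀ i < k, ∃ v, c v = i

/-- `u` is a b-vertex: it has a neighbor in every color class other than its own. -/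
def IsBVertex (G : SimpleGraph V) (k : ℕ) (c : V → ℕ) (u : V) : Prop :=
  ∀ j < k, j ≠ c u → ∃ w, G.Adj u w ∧ c w = j

/-- A b-coloring of `G` with `k` colors: a proper coloring using exactly `k` colors
in which every color class contains a b-vertex. -/
def IsBColoring (G : SimpleGraph V) (k : ℕ) (c : V → ℕ) : Prop :=
  IsProperKColoring G k c ∧ ∀ i < k, ∃ u, c u = i ∧ IsBVertex G k c u

/-- The b-chromatic number: the largest `k` for which `G` has a b-coloring with `k` colors. -/
noncomputable def bChrom [Fintype V] (G : SimpleGraph V) : ℕ :=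
  sSup {k | ∃ c : V → ℕ, IsBColoring G k c}
structure NoShort (G : SimpleGraph V) : Prop where
  c3 : ∀ a b c, G.Adj a b → G.Adj b c → G.Adj c a → False
  c4 : ∀ a b c d, G.Adj a b → G.Adj b c → G.Adj c d → G.Adj d a → a = c ∨ b = d
  c5 : ∀ a b c d e, G.Adj a b → G.Adj b c → G.Adj c d → G.Adj d e → G.Adj e a → False
  c6 : ∀ a b c d e f, G.Adj a b → G.Adj b c → G.Adj c d → G.Adj d e → G.Adj e f → G.Adj f a →
    a = c ∨ b = d ∨ c = e ∨ d = f ∨ e = a ∨ f = b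
  c7 : ∀ a b c d e f g, G.Adj a b → G.Adj b c → G.Adj c d → G.Adj d e → G.Adj e f → G.Adj f g →
    G.Adj g a → False

theorem noShort_of_girth (G : SimpleGraph V) (hg : (8 : ℕ∞) ≤ G.egirth) : NoShort G := by
  rw [SimpleGraph.le_egirth] at hg
  have c3 : ∀ a b c, G.Adj a b → G.Adj b c → G.Adj c a → False := by
    intro a b c h1 h2 h3
    have := hg a (.cons h1 (.cons h2 (.cons h3 .nil))) (by
      have := h1.ne; have := h2.ne; have := h3.ne
      simp [SimpleGraph.Walk.isCycle_def, SimpleGraph.Walk.isTrail_def]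
      grind)
    simp at this
    exact absurd this (by decide)
  have c4 : ∀ a b c d, G.Adj a b → G.Adj b c → G.Adj c d → G.Adj d a → a = c ∨ b = d := by
    intro a b c d h1 h2 h3 h4
    by_contra hne
    have := hg a (.cons h1 (.cons h2 (.cons h3 (.cons h4 .nil)))) (by
      have := h1.ne; have := h2.ne; have := h3.ne; have := h4.ne
      simp [SimpleGraph.Walk.isCycle_def, SimpleGraph.Walk.isTrail_def]
      grind)
    simp at this
    exact absurd this (by decide)
  have c5 : ∀ a b c d e, G.Adj a b → G.Adj b c → G.Adj c d → G.Adj d e → G.Adj e a → False := by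
    intro a b c d e h1 h2 h3 h4 h5
    have n1 : a ≠ c := by rintro rfl; exact c3 _ _ _ h3 h4 h5
    have n2 : b ≠ d := by rintro rfl; exact c3 _ _ _ h4 h5 h1
    have n3 : c ≠ e := by rintro rfl; exact c3 _ _ _ h5 h1 h2
    have n4 : d ≠ a := by rintro rfl; exact c3 _ _ _ h1 h2 h3
    have n5 : e ≠ b := by rintro rfl; exact c3 _ _ _ h2 h3 h4
    have := hg a (.cons h1 (.cons h2 (.cons h3 (.cons h4 (.cons h5 .nil))))) (by
      have := h1.ne; have := h2.ne; have := h3.ne; have := h4.ne; have := h5.ne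
      simp [SimpleGraph.Walk.isCycle_def, SimpleGraph.Walk.isTrail_def]
      grind)
    simp at this
    exact absurd this (by decide)
  have c6 : ∀ a b c d e f, G.Adj a b → G.Adj b c → G.Adj c d → G.Adj d e → G.Adj e f →
      G.Adj f a → a = c ∨ b = d ∨ c = e ∨ d = f ∨ e = a ∨ f = b := by
    intro a b c d e f h1 h2 h3 h4 h5 h6
    by_contra hne
    have n1 : a ≠ d := by rintro rfl; exact c3 _ _ _ h1 h2 h3
    have n2 : b ≠ e := by rintro rfl; exact c3 _ _ _ h2 h3 h4
    have n3 : c ≠ f := by rintro rfl; exact c3 _ _ _ h3 h4 h5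
    have := hg a (.cons h1 (.cons h2 (.cons h3 (.cons h4 (.cons h5 (.cons h6 .nil)))))) (by
      have := h1.ne; have := h2.ne; have := h3.ne; have := h4.ne; have := h5.ne
      have := h6.ne
      simp [SimpleGraph.Walk.isCycle_def, SimpleGraph.Walk.isTrail_def]
      grind)
    simp at this
    exact absurd this (by decide)
  refine ⟨c3, c4, c5, c6, ?_⟩
  intro a b c d e f g h1 h2 h3 h4 h5 h6 h7
  have n1 : a ≠ c := by rintro rfl; exact c5 _ _ _ _ _ h3 h4 h5 h6 h7
  have n2 : b ≠ d := by rintro rfl; exact c5 _ _ _ _ _ h4 h5 h6 h7 h1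
  have n3 : c ≠ e := by rintro rfl; exact c5 _ _ _ _ _ h5 h6 h7 h1 h2
  have n4 : d ≠ f := by rintro rfl; exact c5 _ _ _ _ _ h6 h7 h1 h2 h3
  have n5 : e ≠ g := by rintro rfl; exact c5 _ _ _ _ _ h7 h1 h2 h3 h4
  have n6 : f ≠ a := by rintro rfl; exact c5 _ _ _ _ _ h1 h2 h3 h4 h5
  have n7 : g ≠ b := by rintro rfl; exact c5 _ _ _ _ _ h2 h3 h4 h5 h6
  have m1 : a ≠ d := by rintro rfl; exact c3 _ _ _ h1 h2 h3
  have m2 : b ≠ e := by rintro rfl; exact c3 _ _ _ h2 h3 h4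
  have m3 : c ≠ f := by rintro rfl; exact c3 _ _ _ h3 h4 h5
  have m4 : d ≠ g := by rintro rfl; exact c3 _ _ _ h4 h5 h6
  have m5 : e ≠ a := by rintro rfl; exact c3 _ _ _ h5 h6 h7
  have m6 : f ≠ b := by rintro rfl; exact c3 _ _ _ h6 h7 h1
  have m7 : g ≠ c := by rintro rfl; exact c3 _ _ _ h7 h1 h2
  have := hg a (.cons h1 (.cons h2 (.cons h3 (.cons h4 (.cons h5 (.cons h6 (.cons h7 .nil))))))) (by
      have := h1.ne; have := h2.ne; have := h3.ne; have := h4.ne; have := h5.ne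
      have := h6.ne; have := h7.ne
      simp [SimpleGraph.Walk.isCycle_def, SimpleGraph.Walk.isTrail_def]
      grind)
  simp at this
  exact absurd this (by decide)

/-- `v` has at least `n` neighbors. -/
def HD (G : SimpleGraph V) (n : ℕ) (v : V) : Prop :=
  ∃ B : Finset V, (∀ t ∈ B, G.Adj v t) ∧ n ≤ B.card

theorem exists_surj_map (A : Finset ℕ) (B : Finset V) (hA : A.Nonempty) (h : A.card ≤ B.card) :
    ∃ m : V → ℕ, (∀ t, m t ∈ A) ∧ ∀ l ∈ A, ∃ t ∈ B, m t = l := by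
  classical
  obtain ⟨φ⟩ : Nonempty (A ↪ B) := Function.Embedding.nonempty_of_card_le (by simpa using h)
  have : Nonempty A := hA.to_subtype
  let φ' : A → V := fun l => (φ l : V)
  have hinj : Function.Injective φ' := fun a b hab => φ.injective (Subtype.ext hab)
  refine ⟨fun t => ((Function.invFun φ' t : A) : ℕ), fun t => (Function.invFun φ' t).2, ?_⟩
  intro l hl
  refine ⟨φ' ⟨l, hl⟩, (φ ⟨l, hl⟩).2, ?_⟩
  show ((Function.invFun φ' (φ' ⟨l, hl⟩) : A) : ℕ) = l
  rw [Function.leftInverse_invFun hinj]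

theorem iris_bColoring (G : SimpleGraph V) (hN : NoShort G) (n : ℕ) (f : V → ℕ)
    (hf : ∀ v, f v < n) (hp : ∀ a b, G.Adj a b → f a ≠ f b) (u : V) (S : Finset V)
    (hS : S.card = n) (hSu : ∀ v ∈ S, G.Adj u v) (hSd : ∀ v ∈ S, HD G n v) :
    ∃ c : V → ℕ, IsBColoring G (n + 1) c := by
  classical
  have hn0 : 0 < n := lt_of_le_of_lt (Nat.zero_le _) (hf u)
  have hn2 : 2 ≤ n := by
    obtain ⟨v, hv⟩ := Finset.card_pos.1 (hS ▸ hn0)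
    have := hp u v (hSu v hv); have := hf u; have := hf v
    omega
  obtain ⟨e, he1, he2⟩ := exists_surj_map (Finset.range n) S ⟨0, by simpa using hn0⟩ (by simp [hS])
  simp only [Finset.mem_range] at he1 he2
  have heinj : ∀ a ∈ S, ∀ b ∈ S, e a = e b → a = b := by
    have himg : S.image e = Finset.range n := by
      ext l; simp only [Finset.mem_image, Finset.mem_range]
      exact ⟨by rintro ⟨a, _, rfl⟩; exact he1 a, fun h => he2 l h⟩
    have : Set.InjOn e S := Finset.card_image_iff.1 (by rw [himg, hS]; simp)
    exact fun a ha b hb h => this ha hb h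
  have hm : ∀ v, ∃ m : V → ℕ, v ∈ S → (∀ t, m t < n ∧ m t ≠ e v) ∧
      ∀ l < n, l ≠ e v → ∃ t, G.Adj v t ∧ t ≠ u ∧ m t = l := by
    intro v
    by_cases hv : v ∈ S
    · obtain ⟨B, hB, hBc⟩ := hSd v hv
      have hA : ((Finset.range n).erase (e v)).card = n - 1 := by
        rw [Finset.card_erase_of_mem (by simpa using he1 v)]; simp
      have hBu : n - 1 ≤ (B.erase u).card := by
        have := Finset.pred_card_le_card_erase (s := B) (a := u)
        omega
      obtain ⟨m, hm1, hm2⟩ := exists_surj_map ((Finset.range n).erase (e v)) (B.erase u)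
        (Finset.card_pos.1 (by omega)) (by omega)
      refine ⟨m, fun _ => ⟨fun t => ?_, fun l hl hne => ?_⟩⟩
      · have := hm1 t
        simp only [Finset.mem_erase, Finset.mem_range] at this
        exact ⟨this.2, this.1⟩
      · obtain ⟨t, ht, htl⟩ := hm2 l (by simp [hl, hne])
        simp only [Finset.mem_erase] at ht
        exact ⟨t, hB t ht.2, ht.1, htl⟩
    · exact ⟨fun _ => 0, fun h => absurd h hv⟩
  choose m hm using hm
  -- children of `S`
  let Q : V → Prop := fun x => ∃ v, v ∈ S ∧ G.Adj v x
  let X : V → Prop := fun x => ∃ v t, v ∈ S ∧ G.Adj v t ∧ t ≠ u ∧ G.Adj t x ∧ m v t = f x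
  let c : V → ℕ := fun x => if x = u then n else if x ∈ S then e x else
    if h : Q x then m h.choose x else if X x then n else f x
  have cu : c u = n := by simp [c]
  have uS : u ∉ S := fun h => G.irrefl (hSu u h)
  have cS : ∀ v ∈ S, c v = e v := by
    intro v hv
    have : v ≠ u := fun h => uS (h ▸ hv)
    simp [c, hv, this]
  have cQ : ∀ v ∈ S, ∀ t, G.Adj v t → t ≠ u → c t = m v t := by
    intro v hv t hvt htu
    have hQ : Q t := ⟨v, hv, hvt⟩
    have htS : t ∉ S := fun h => hN.c3 _ _ _ (hSu v hv) hvt (hSu t h).symm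
    have hch : hQ.choose = v := by
      have h := hQ.choose_spec
      rcases hN.c4 _ _ _ _ (hSu v hv) hvt h.2.symm (hSu _ h.1).symm with h' | h'
      · exact absurd h'.symm htu
      · exact h'.symm
    simp only [c, htu, htS, if_false]
    rw [dif_pos hQ, hch]
  have cX : ∀ x, x ≠ u → x ∉ S → ¬ Q x → X x → c x = n := by
    intro x h1 h2 h3 h4; simp [c, h1, h2, h3, h4]
  have cR : ∀ x, x ≠ u → x ∉ S → ¬ Q x → ¬ X x → c x = f x := by
    intro x h1 h2 h3 h4; simp [c, h1, h2, h3, h4]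
  have clt : ∀ x, c x < n + 1 := by
    intro x
    by_cases h1 : x = u
    · rw [h1, cu]; omega
    by_cases h2 : x ∈ S
    · rw [cS x h2]; have := he1 x; omega
    by_cases h3 : Q x
    · obtain ⟨v, hv, hvx⟩ := h3
      rw [cQ v hv x hvx h1]; have := ((hm v hv).1 x).1; omega
    by_cases h4 : X x
    · rw [cX x h1 h2 h3 h4]; omega
    · rw [cR x h1 h2 h3 h4]; have := hf x; omega
  -- properness against `u`
  have pu : ∀ y, G.Adj u y → c u ≠ c y := by
    intro y huy
    rw [cu]
    have h1 : y ≠ u := huy.ne'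
    by_cases h2 : y ∈ S
    · rw [cS y h2]; have := he1 y; omega
    by_cases h3 : Q y
    · obtain ⟨v, hv, hvx⟩ := h3
      exact (hN.c3 _ _ _ (hSu v hv) hvx huy.symm).elim
    by_cases h4 : X y
    · obtain ⟨v, t, hv, hvt, htu, hty, -⟩ := h4
      rcases hN.c4 _ _ _ _ (hSu v hv) hvt hty huy.symm with h | h
      · exact absurd h.symm htu
      · exact absurd (h ▸ hv) h2
    · rw [cR y h1 h2 h3 h4]; have := hf y; omega
  have pS : ∀ v ∈ S, ∀ y, G.Adj v y → c v ≠ c y := by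
    intro v hv y hvy
    by_cases h1 : y = u
    · rw [h1] at hvy ⊢; exact (pu v hvy.symm).symm
    rw [cS v hv, cQ v hv y hvy h1]
    exact ((hm v hv).1 y).2.symm
  have pQ : ∀ v ∈ S, ∀ t, G.Adj v t → t ≠ u → ∀ y, G.Adj t y → c t ≠ c y := by
    intro v hv t hvt htu y hty
    by_cases h1 : y = u
    · rw [h1] at hty ⊢; exact (pu t hty.symm).symm
    by_cases h2 : y ∈ S
    · exact (pS y h2 t hty.symm).symm
    by_cases h3 : Q y
    · obtain ⟨v', hv', hvx⟩ := h3
      exact (hN.c5 _ _ _ _ _ (hSu v hv) hvt hty hvx.symm (hSu v' hv').symm).elim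
    rw [cQ v hv t hvt htu]
    by_cases h4 : X y
    · rw [cX y h1 h2 h3 h4]; have := ((hm v hv).1 t).1; omega
    · rw [cR y h1 h2 h3 h4]
      exact fun h => h4 ⟨v, t, hv, hvt, htu, hty, h⟩
  refine ⟨c, ⟨clt, ?_, ?_⟩, ?_⟩
  · intro x y hxy
    by_cases x1 : x = u
    · subst x1; exact pu y hxy
    by_cases x2 : x ∈ S
    · exact pS x x2 y hxy
    by_cases x3 : Q x
    · obtain ⟨v, hv, hvx⟩ := x3
      exact pQ v hv x hvx x1 y hxy
    by_cases y1 : y = u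
    · subst y1; exact (pu x hxy.symm).symm
    by_cases y2 : y ∈ S
    · exact (pS y y2 x hxy.symm).symm
    by_cases y3 : Q y
    · obtain ⟨v, hv, hvx⟩ := y3
      exact (pQ v hv y hvx y1 x hxy.symm).symm
    have := hf x
    have := hf y
    by_cases x4 : X x <;> by_cases y4 : X y
    · obtain ⟨v, t, hv, hvt, htu, htx, -⟩ := x4
      obtain ⟨v', t', hv', hvt', htu', hty, -⟩ := y4
      exact (hN.c7 _ _ _ _ _ _ _ (hSu v hv) hvt htx hxy hty.symm hvt'.symm (hSu v' hv').symm).elim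
    · rw [cX x x1 x2 x3 x4, cR y y1 y2 y3 y4]; omega
    · rw [cR x x1 x2 x3 x4, cX y y1 y2 y3 y4]; omega
    · rw [cR x x1 x2 x3 x4, cR y y1 y2 y3 y4]; exact hp x y hxy
  · intro i hi
    by_cases h : i = n
    · exact ⟨u, by rw [cu, h]⟩
    · obtain ⟨v, hv, hvi⟩ := he2 i (by omega)
      exact ⟨v, by rw [cS v hv, hvi]⟩
  · intro i hi
    by_cases h : i = n
    · refine ⟨u, by rw [cu, h], ?_⟩
      intro j hj hne
      rw [cu] at hne
      obtain ⟨v, hv, hvi⟩ := he2 j (by omega)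
      exact ⟨v, hSu v hv, by rw [cS v hv, hvi]⟩
    · obtain ⟨v, hv, hvi⟩ := he2 i (by omega)
      refine ⟨v, by rw [cS v hv, hvi], ?_⟩
      intro j hj hne
      rw [cS v hv] at hne
      by_cases hjn : j = n
      · exact ⟨u, (hSu v hv).symm, by rw [cu, hjn]⟩
      · obtain ⟨t, ht1, ht2, ht3⟩ := (hm v hv).2 j (by omega) hne
        exact ⟨t, ht1, by rw [cQ v hv t ht1 ht2, ht3]⟩

theorem drop_class (G : SimpleGraph V) (k i0 : ℕ) (hi0 : i0 ≤ k) (ψ : V → ℕ)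
    (hle : ∀ v, ψ v ≤ k) (hp : ∀ a b, G.Adj a b → ψ a ≠ ψ b)
    (hfree : ∀ v, ψ v = i0 → ∃ l ≤ k, l ≠ i0 ∧ ∀ w, G.Adj v w → ψ w ≠ l) :
    ∃ c : V → ℕ, (∀ v, c v < k) ∧ (∀ a b, G.Adj a b → c a ≠ c b) ∧
      ∀ v, ψ v ≠ i0 → c v = if ψ v = k then i0 else ψ v := by
  classical
  have h : ∀ v, ∃ l, ψ v = i0 → l ≤ k ∧ l ≠ i0 ∧ ∀ w, G.Adj v w → ψ w ≠ l := by
    intro v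
    by_cases hv : ψ v = i0
    · obtain ⟨l, h1, h2, h3⟩ := hfree v hv
      exact ⟨l, fun _ => ⟨h1, h2, h3⟩⟩
    · exact ⟨0, fun h => absurd h hv⟩
  choose g hg using h
  let t : V → ℕ := fun v => if ψ v = i0 then g v else ψ v
  have ht1 : ∀ v, ψ v = i0 → t v = g v := fun v hv => by simp [t, hv]
  have ht2 : ∀ v, ψ v ≠ i0 → t v = ψ v := fun v hv => by simp [t, hv]
  have htle : ∀ v, t v ≤ k ∧ t v ≠ i0 := by
    intro v
    by_cases hv : ψ v = i0
    · rw [ht1 v hv]; exact ⟨(hg v hv).1, (hg v hv).2.1⟩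
    · rw [ht2 v hv]; exact ⟨hle v, hv⟩
  have htp : ∀ a b, G.Adj a b → t a ≠ t b := by
    intro a b hab
    by_cases ha : ψ a = i0
    · have hb : ψ b ≠ i0 := fun h => hp a b hab (ha.trans h.symm)
      rw [ht1 a ha, ht2 b hb]
      exact ((hg a ha).2.2 b hab).symm
    · by_cases hb : ψ b = i0
      · rw [ht2 a ha, ht1 b hb]
        exact (hg b hb).2.2 a hab.symm
      · rw [ht2 a ha, ht2 b hb]; exact hp a b hab
  refine ⟨fun v => if t v = k then i0 else t v, ?_, ?_, ?_⟩
  · intro v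
    have := htle v
    dsimp only
    split_ifs <;> omega
  · intro a b hab
    have := htp a b hab; have := htle a; have := htle b
    dsimp only
    split_ifs <;> omega
  · intro v hv
    simp only [ht2 v hv]

/-- `b` is a weak b-vertex of color `i`. -/
def WB (G : SimpleGraph V) (k : ℕ) (ψ : V → ℕ) (i : ℕ) (b : V) : Prop :=
  ψ b = i ∧ (∀ l < k, l ≠ i → ∃ w, G.Adj b w ∧ ψ w = l) ∧ HD G k b

/-- A weak b-coloring: proper with colors `0..k`, every color below `k` has a weak b-vertex. -/
def WState (G : SimpleGraph V) (k : ℕ) (ψ : V → ℕ) : Prop :=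
  (∀ v, ψ v ≤ k) ∧ (∀ a b, G.Adj a b → ψ a ≠ ψ b) ∧ ∀ i < k, ∃ b, WB G k ψ i b

/-- Color `i` has no weak b-vertex adjacent to `u`. -/
def JJ (G : SimpleGraph V) (k : ℕ) (ψ : V → ℕ) (u : V) (i : ℕ) : Prop :=
  i < k ∧ ∀ b, WB G k ψ i b → ¬ G.Adj u b

/-- All weak b-vertices of color `i` depend on a single `j`-colored neighbor, adjacent to `u`. -/
def Dep (G : SimpleGraph V) (k : ℕ) (ψ : V → ℕ) (u : V) (j i : ℕ) : Prop :=
  ∀ b, WB G k ψ i b → ∃ w, G.Adj u w ∧ G.Adj w b ∧ ψ w = j ∧ ∀ x, G.Adj b x → ψ x = j → x = w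

/-- A list of `k` distinct neighbor colors gives degree at least `k`. -/
theorem hd_of_colors (G : SimpleGraph V) (ψ : V → ℕ) (b : V) (A : Finset ℕ)
    (h : ∀ l ∈ A, ∃ w, G.Adj b w ∧ ψ w = l) : HD G A.card b := by
  classical
  have : Nonempty V := ⟨b⟩
  choose! g hg using h
  refine ⟨A.image g, ?_, ?_⟩
  · intro t ht
    obtain ⟨l, hl, rfl⟩ := Finset.mem_image.1 ht
    exact (hg l hl).1
  · rw [Finset.card_image_of_injOn]
    intro x hx y hy hxy
    have h1 := (hg x hx).2
    have h2 := (hg y hy).2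
    rw [← h1, ← h2, hxy]

theorem step_sees [Fintype V] (G : SimpleGraph V) (k : ℕ) (ψ : V → ℕ)
    (hs : WState G k ψ)
    (hmin : ∀ ψ', WState G k ψ' → {v | ψ v = k}.ncard ≤ {v | ψ' v = k}.ncard)
    (u : V) (hu : ψ u = k) : ∀ j < k, ∃ w, G.Adj u w ∧ ψ w = j := by
  classical
  intro j hj
  by_contra hno
  push Not at hno
  have hcol : ∀ x, x ≠ u → Function.update ψ u j x = ψ x := fun x hx => by simp [hx]
  have hcu : Function.update ψ u j u = j := by simp
  have hst : WState G k (Function.update ψ u j) := by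
    refine ⟨?_, ?_, ?_⟩
    · intro v
      by_cases hv : v = u
      · rw [hv, hcu]; omega
      · rw [hcol v hv]; exact hs.1 v
    · intro a b hab
      by_cases ha : a = u
      · subst ha
        rw [hcu, hcol b hab.ne']
        exact (hno b hab).symm
      · rw [hcol a ha]
        by_cases hb : b = u
        · subst hb
          rw [hcu]; exact hno a hab.symm
        · rw [hcol b hb]; exact hs.2.1 a b hab
    · intro i hi
      obtain ⟨b, hb1, hb2, hb3⟩ := hs.2.2 i hi
      refine ⟨b, ?_, ?_, hb3⟩
      · rw [hcol b (by rintro rfl; omega)]; exact hb1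
      · intro l hl hli
        obtain ⟨w, hw1, hw2⟩ := hb2 l hl hli
        exact ⟨w, hw1, by rw [hcol w (by rintro rfl; omega)]; exact hw2⟩
  have h1 := hmin _ hst
  have h2 : {v | Function.update ψ u j v = k}.ncard < {v | ψ v = k}.ncard := by
    apply Set.ncard_lt_ncard _ (Set.toFinite _)
    refine ⟨?_, ?_⟩
    · intro v hv
      simp only [Set.mem_ofPred_eq] at hv ⊢
      by_cases hvu : v = u
      · rw [hvu]; exact hu
      · rwa [hcol v hvu] at hv
    · intro h
      have := h (show u ∈ {v | ψ v = k} from hu)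
      simp only [Set.mem_ofPred_eq, hcu] at this
      omega
  omega

theorem step_dep [Fintype V] (G : SimpleGraph V) (hN : NoShort G) (k : ℕ) (ψ : V → ℕ)
    (hs : WState G k ψ)
    (hmin : ∀ ψ', WState G k ψ' → {v | ψ v = k}.ncard ≤ {v | ψ' v = k}.ncard)
    (u : V) (hu : ψ u = k) (j : ℕ) (hj : JJ G k ψ u j) :
    ∃ i, i < k ∧ Dep G k ψ u j i := by
  classical
  obtain ⟨hjk, hj⟩ := hj
  -- every j-colored neighbor of u can be recolored
  have hfree : ∀ w, ∃ l, G.Adj u w → ψ w = j → l < k ∧ l ≠ j ∧ ∀ x, G.Adj w x → ψ x ≠ l := by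
    intro w
    by_cases hw : G.Adj u w ∧ ψ w = j
    · by_contra hno
      push Not at hno
      have hsee : ∀ l < k, l ≠ j → ∃ x, G.Adj w x ∧ ψ x = l := fun l hl hlj =>
        (hno l).2.2 hl hlj
      refine hj w ⟨hw.2, hsee, ?_⟩ hw.1
      have := hd_of_colors G ψ w ((Finset.range (k + 1)).erase j) (by
        intro l hl
        simp only [Finset.mem_erase, Finset.mem_range] at hl
        by_cases hlk : l = k
        · exact ⟨u, hw.1.symm, by rw [hu, hlk]⟩
        · exact hsee l (by omega) hl.1)
      rwa [Finset.card_erase_of_mem (by simp; omega), Finset.card_range, Nat.add_sub_cancel] at this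
    · exact ⟨0, fun h1 h2 => absurd ⟨h1, h2⟩ hw⟩
  choose g hg using hfree
  let W : V → Prop := fun w => G.Adj u w ∧ ψ w = j
  let c : V → ℕ := fun x => if x = u then j else if W x then g x else ψ x
  have cu : c u = j := by simp [c]
  have uW : ¬ W u := fun h => G.irrefl h.1
  have cW : ∀ x, W x → c x = g x := by
    intro x hx
    have : x ≠ u := by rintro rfl; exact uW hx
    simp [c, hx, this]
  have cR : ∀ x, x ≠ u → ¬ W x → c x = ψ x := fun x h1 h2 => by simp [c, h1, h2]
  have pu : ∀ y, G.Adj u y → c u ≠ c y := by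
    intro y hy
    rw [cu]
    by_cases h : W y
    · rw [cW y h]; exact (hg y h.1 h.2).2.1.symm
    · rw [cR y hy.ne' h]; exact fun h' => h ⟨hy, h'.symm⟩
  have pW : ∀ x, W x → ∀ y, G.Adj x y → c x ≠ c y := by
    intro x hx y hxy
    by_cases h1 : y = u
    · rw [h1] at hxy ⊢; exact (pu x hxy.symm).symm
    by_cases h2 : W y
    · exact (hN.c3 _ _ _ hx.1 hxy h2.1.symm).elim
    · rw [cW x hx, cR y h1 h2]
      exact ((hg x hx.1 hx.2).2.2 y hxy).symm
  by_contra hno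
  push Not at hno
  have hst : WState G k c := by
    refine ⟨?_, ?_, ?_⟩
    · intro v
      by_cases h1 : v = u
      · rw [h1, cu]; omega
      by_cases h2 : W v
      · rw [cW v h2]; exact (hg v h2.1 h2.2).1.le
      · rw [cR v h1 h2]; exact hs.1 v
    · intro a b hab
      by_cases h1 : a = u
      · subst h1; exact pu b hab
      by_cases h2 : W a
      · exact pW a h2 b hab
      by_cases h3 : b = u
      · subst h3; exact (pu a hab.symm).symm
      by_cases h4 : W b
      · exact (pW b h4 a hab.symm).symm
      rw [cR a h1 h2, cR b h3 h4]; exact hs.2.1 a b hab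
    · intro i hi
      by_cases hij : i = j
      · subst hij
        obtain ⟨b, hb⟩ := hs.2.2 i hi
        have hbW : ¬ W b := fun h => hj b hb h.1
        obtain ⟨hb1, hb2, hb3⟩ := hb
        refine ⟨b, ?_, ?_, hb3⟩
        · rw [cR b (by rintro rfl; omega) hbW]; exact hb1
        · intro l hl hli
          obtain ⟨w, hw1, hw2⟩ := hb2 l hl hli
          exact ⟨w, hw1, by
            rw [cR w (by rintro rfl; omega) (fun h => hli (hw2.symm.trans h.2))]; exact hw2⟩
      · have := hno i hi
        unfold Dep at this
        push Not at this
        obtain ⟨b, ⟨hb1, hb2, hb3⟩, hb⟩ := this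
        refine ⟨b, ?_, ?_, hb3⟩
        · rw [cR b (by rintro rfl; omega) (fun h => hij (hb1.symm.trans h.2))]; exact hb1
        · intro l hl hli
          obtain ⟨w, hw1, hw2⟩ := hb2 l hl hli
          by_cases hlj : l = j
          · subst hlj
            by_cases hW : W w
            · obtain ⟨x, hx1, hx2, hx3⟩ := hb w hW.1 hw1.symm hw2
              have hxu : x ≠ u := by rintro rfl; omega
              refine ⟨x, hx1, ?_⟩
              rw [cR x hxu ?_]; · exact hx2
              intro hxW
              rcases hN.c4 _ _ _ _ hW.1 hw1.symm hx1 hxW.1.symm with h | h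
              · rw [← h] at hb1; omega
              · exact hx3 h.symm
            · exact ⟨w, hw1, by rw [cR w (by rintro rfl; omega) hW]; exact hw2⟩
          · exact ⟨w, hw1, by
              rw [cR w (by rintro rfl; omega) (fun h => hlj (hw2.symm.trans h.2))]; exact hw2⟩
  have h1 := hmin _ hst
  have h2 : {v | c v = k}.ncard < {v | ψ v = k}.ncard := by
    apply Set.ncard_lt_ncard _ (Set.toFinite _)
    refine ⟨?_, ?_⟩
    · intro v hv
      simp only [Set.mem_ofPred_eq] at hv ⊢
      by_cases hvu : v = u
      · rw [hvu]; exact hu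
      by_cases hvW : W v
      · rw [cW v hvW] at hv; have := (hg v hvW.1 hvW.2).1; omega
      · rwa [cR v hvu hvW] at hv
    · intro h
      have := h (show u ∈ {v | ψ v = k} from hu)
      simp only [Set.mem_ofPred_eq, cu] at this
      omega
  omega

/-- The dependency map is a permutation of `JJ`. -/
theorem step_perm [Fintype V] (G : SimpleGraph V) (hN : NoShort G) (k : ℕ) (ψ : V → ℕ)
    (hs : WState G k ψ)
    (hmin : ∀ ψ', WState G k ψ' → {v | ψ v = k}.ncard ≤ {v | ψ' v = k}.ncard)
    (u : V) (hu : ψ u = k) (i : ℕ) (hi : JJ G k ψ u i) :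
    ∃ j, JJ G k ψ u j ∧ Dep G k ψ u j i := by
  classical
  have h := step_dep G hN k ψ hs hmin u hu
  choose! σ hσ using h
  let A : Finset ℕ := (Finset.range k).filter (JJ G k ψ u)
  have hA : ∀ j, j ∈ A ↔ JJ G k ψ u j := by
    intro j
    simp only [A, Finset.mem_filter, Finset.mem_range]
    exact ⟨fun h => h.2, fun h => ⟨h.1, h⟩⟩
  have hmaps : ∀ j ∈ A, σ j ∈ A := by
    intro j hj
    rw [hA] at hj ⊢
    refine ⟨(hσ j hj).1, fun b hb hub => ?_⟩
    obtain ⟨w, hw1, hw2, -⟩ := (hσ j hj).2 b hb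
    exact hN.c3 _ _ _ hw1 hw2 hub.symm
  have hinj : ∀ j ∈ A, ∀ j' ∈ A, σ j = σ j' → j = j' := by
    intro j hj j' hj' h
    rw [hA] at hj hj'
    obtain ⟨b, hb⟩ := hs.2.2 _ (hσ j hj).1
    obtain ⟨w, hw1, hw2, hw3, -⟩ := (hσ j hj).2 b hb
    obtain ⟨w', hw1', hw2', hw3', -⟩ := (hσ j' hj').2 b (h ▸ hb)
    rcases hN.c4 _ _ _ _ hw1 hw2 hw2'.symm hw1'.symm with h | h
    · have := (hσ j hj).1
      have := hb.1
      rw [← h] at this; omega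
    · rw [← hw3, ← hw3', h]
  obtain ⟨j, hj, hji⟩ := Finset.surj_on_of_inj_on_of_card_le (s := A) (t := A) (fun j _ => σ j) hmaps
    (fun a b ha hb h => hinj a ha b hb h) le_rfl i ((hA i).2 hi)
  exact ⟨j, (hA j).1 hj, hji ▸ (hσ j ((hA j).1 hj)).2⟩

theorem step_final [Fintype V] (G : SimpleGraph V) (hN : NoShort G) (n : ℕ) (f : V → ℕ)
    (hf : ∀ v, f v < n) (hfp : ∀ a b, G.Adj a b → f a ≠ f b) (k : ℕ) (hk : k = n + 1)
    (ψ : V → ℕ) (hs : WState G k ψ)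
    (hmin : ∀ ψ', WState G k ψ' → {v | ψ v = k}.ncard ≤ {v | ψ' v = k}.ncard)
    (u : V) (hu : ψ u = k) : ∃ c : V → ℕ, IsBColoring G k c := by
  classical
  by_contra hcon
  -- no iris: `JJ` is never empty
  have hJne : ∀ y, ψ y = k → ∃ p, JJ G k ψ y p := by
    intro y hy
    by_contra hno
    have hD : ∀ p < k, ∃ b, WB G k ψ p b ∧ G.Adj y b := by
      intro p hp
      by_contra h
      push Not at h
      exact hno ⟨p, hp, h⟩
    have : Nonempty V := ⟨u⟩
    choose! g hg using hD
    refine hcon (hk ▸ iris_bColoring G hN n f hf hfp y ((Finset.range n).image g) ?_ ?_ ?_)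
    · rw [Finset.card_image_of_injOn, Finset.card_range]
      intro a ha b hb hab
      simp only [Finset.coe_range, Set.mem_Iio] at ha hb
      have h1 := (hg a (by omega)).1.1
      have h2 := (hg b (by omega)).1.1
      rw [← h1, ← h2, hab]
    · intro v hv
      obtain ⟨p, hp, rfl⟩ := Finset.mem_image.1 hv
      rw [Finset.mem_range] at hp
      exact (hg p (by omega)).2
    · intro v hv
      obtain ⟨p, hp, rfl⟩ := Finset.mem_image.1 hv
      rw [Finset.mem_range] at hp
      obtain ⟨B, hB1, hB2⟩ := (hg p (by omega)).1.2.2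
      exact ⟨B, hB1, by omega⟩
  have hperm := fun y hy i hi => step_perm G hN k ψ hs hmin y hy i hi
  have hsees := step_sees G k ψ hs hmin u hu
  -- structural description of J-colored weak b-vertices
  have hb0 : ∀ y, ψ y = k → ∀ i, JJ G k ψ y i → ∀ b, WB G k ψ i b →
      ∃ w, G.Adj y w ∧ G.Adj w b ∧ JJ G k ψ y (ψ w) ∧ ∀ x, G.Adj b x → ψ x = ψ w → x = w := by
    intro y hy i hi b hb
    obtain ⟨j, hj, hd⟩ := hperm y hy i hi
    obtain ⟨w, h1, h2, h3, h4⟩ := hd b hb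
    subst h3
    exact ⟨w, h1, h2, hj, h4⟩
  have hWBk : ∀ i < k, ∀ b y, WB G k ψ i b → ψ y = k → b ≠ y := by
    rintro i hi b y hb hy rfl
    have := hb.1; omega
  -- no J-colored weak b-vertex sees color k
  have h5 : ∀ i, JJ G k ψ u i → ∀ b, WB G k ψ i b → ∀ y, G.Adj b y → ψ y ≠ k := by
    intro i hi b hb y hby hy
    obtain ⟨w, hw1, hw2, hw3, -⟩ := hb0 u hu i hi b hb
    have hbu := hWBk i hi.1 b u hb hu
    have hwy : w ≠ y := by rintro rfl; have := hw3.1; omega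
    obtain ⟨p, hp⟩ := hJne y hy
    by_cases hpu : JJ G k ψ u p
    · obtain ⟨b', hb'⟩ := hs.2.2 p hp.1
      obtain ⟨w', hw1', hw2', -⟩ := hb0 y hy p hp b' hb'
      obtain ⟨w'', hw1'', hw2'', -⟩ := hb0 u hu p hpu b' hb'
      exact hN.c7 _ _ _ _ _ _ _ hw1 hw2 hby hw1' hw2' hw2''.symm hw1''.symm
    · have : ∃ b', WB G k ψ p b' ∧ G.Adj u b' := by
        by_contra h
        push Not at h
        exact hpu ⟨hp.1, h⟩
      obtain ⟨b', hb', hub'⟩ := this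
      obtain ⟨w', hw1', hw2', -⟩ := hb0 y hy p hp b' hb'
      have hb'w : b' ≠ w := by
        rintro rfl
        have := hb'.1
        exact hw3.2 b' (this ▸ hb') hub'
      have hb'y := hWBk p hp.1 b' y hb' hy
      rcases hN.c6 _ _ _ _ _ _ hw1 hw2 hby hw1' hw2' hub'.symm with h | h | h | h | h | h
      · exact hbu h.symm
      · exact hwy h
      · rw [← h] at hw2'
        rcases hN.c4 _ _ _ _ hw1 hw2 hw2' hub'.symm with h | h
        · exact hbu h.symm
        · exact hb'w h.symm
      · exact hb'y h.symm
      · rw [h] at hw1'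
        rcases hN.c4 _ _ _ _ hw1 hw2 hby hw1' with h | h
        · exact hbu h.symm
        · exact hwy h
      · exact hb'w h
  have h6 : ∀ i, JJ G k ψ u i → ∃ b z z', WB G k ψ i b ∧ G.Adj b z ∧ G.Adj b z' ∧ z ≠ z' ∧
      ψ z = ψ z' ∧ (∀ y, G.Adj z y → ψ y ≠ k) ∧ ¬ G.Adj u z ∧ ¬ G.Adj u z' := by
    intro i hi
    obtain ⟨b, hb⟩ := hs.2.2 i hi.1
    obtain ⟨w, hw1, hw2, hw3, hw4⟩ := hb0 u hu i hi b hb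
    have hbu := hWBk i hi.1 b u hb hu
    obtain ⟨B, hB1, hB2⟩ := hb.2.2
    obtain ⟨z, hz, z', hz', hne, heq⟩ := Finset.exists_ne_map_eq_of_card_lt_of_maps_to
      (s := B) (t := (Finset.range k).erase i) (f := ψ) (by
        rw [Finset.card_erase_of_mem (by simpa using hi.1), Finset.card_range]
        have := hi.1
        omega) (by
        intro x hx
        have hbx := hB1 x hx
        have h1 := h5 i hi b hb x hbx
        have h2 := hs.2.1 b x hbx
        have h3 := hs.1 x
        have h4 := hb.1
        simp only [Finset.coe_erase, Finset.coe_range, Set.mem_sdiff, Set.mem_Iio, Set.mem_singleton_iff]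
        omega)
    have hbz := hB1 z hz
    have hbz' := hB1 z' hz'
    have huz : ∀ x x', G.Adj b x → G.Adj b x' → x ≠ x' → ψ x = ψ x' → ¬ G.Adj u x := by
      intro x x' hx hx' hxx hψ hux
      rcases hN.c4 _ _ _ _ hw1 hw2 hx hux.symm with h | h
      · exact hbu h.symm
      · subst h
        exact hxx (hw4 x' hx' hψ.symm).symm
    refine ⟨b, z, z', hb, hbz, hbz', hne, heq, ?_, huz z z' hbz hbz' hne heq,
      huz z' z hbz' hbz hne.symm heq.symm⟩
    intro y hzy hy
    have hiy : JJ G k ψ y i := by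
      refine ⟨hi.1, fun b' hb' hyb' => ?_⟩
      obtain ⟨w', hw1', hw2', -⟩ := hb0 u hu i hi b' hb'
      exact hN.c7 _ _ _ _ _ _ _ hw1 hw2 hbz hzy hyb' hw2'.symm hw1'.symm
    obtain ⟨v, hv1, hv2, hv3, hv4⟩ := hb0 y hy i hiy b hb
    rcases hN.c4 _ _ _ _ hv1 hv2 hbz hzy with h | h
    · exact hWBk i hi.1 b y hb hy h.symm
    · subst h
      exact hne (hv4 z' hbz' heq.symm).symm
  have : Nonempty V := ⟨u⟩
  choose! b z z' hWB hbz hbz' hzz' heq hzk huz huz' using h6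
  have hsep : ∀ i, JJ G k ψ u i → ∀ i', JJ G k ψ u i' → i ≠ i' → ∀ a a', WB G k ψ i a →
      WB G k ψ i' a' → ∀ x, G.Adj a x → G.Adj a' x → ¬ G.Adj u x → False := by
    intro i hi i' hi' hne a a' ha ha' x hx hx' hux
    have hau := hWBk i hi.1 a u ha hu
    have hau' := hWBk i' hi'.1 a' u ha' hu
    have haa : a ≠ a' := by rintro rfl; exact hne (ha.1.symm.trans ha'.1)
    obtain ⟨w, hw1, hw2, -⟩ := hb0 u hu i hi a ha
    obtain ⟨w', hw1', hw2', -⟩ := hb0 u hu i' hi' a' ha'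
    have hwx : w ≠ x := by rintro rfl; exact hux hw1
    have hwx' : w' ≠ x := by rintro rfl; exact hux hw1'
    rcases hN.c6 _ _ _ _ _ _ hw1 hw2 hx hx'.symm hw2'.symm hw1'.symm with h | h | h | h | h | h
    · exact hau h.symm
    · exact hwx h
    · exact haa h
    · exact hwx' h.symm
    · exact hau' h
    · subst h
      rcases hN.c4 _ _ _ _ hw2 hx hx'.symm hw2'.symm with h | h
      · exact hwx h
      · exact haa h
  obtain ⟨i0, hi0⟩ := hJne u hu
  let Z : V → Prop := fun x => ∃ i, JJ G k ψ u i ∧ i ≠ i0 ∧ x = z i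
  let c : V → ℕ := fun x => if Z x then k else ψ x
  have cZ : ∀ x, Z x → c x = k := fun x hx => by simp [c, hx]
  have cR : ∀ x, ¬ Z x → c x = ψ x := fun x hx => by simp [c, hx]
  have clt : ∀ x l, l < k → c x = l → ψ x = l := by
    intro x l hl h
    by_cases hx : Z x
    · rw [cZ x hx] at h; omega
    · rwa [cR x hx] at h
  have Zu : ∀ x, Z x → ¬ G.Adj u x := by
    rintro x ⟨i, hi, -, rfl⟩; exact huz i hi
  have Zk : ∀ x, Z x → ∀ y, G.Adj x y → ψ y ≠ k := by
    rintro x ⟨i, hi, -, rfl⟩; exact hzk i hi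
  have ZZ : ∀ x y, Z x → Z y → ¬ G.Adj x y := by
    rintro x y ⟨i, hi, -, rfl⟩ ⟨i', hi', -, rfl⟩ hadj
    obtain ⟨w, hw1, hw2, -⟩ := hb0 u hu i hi _ (hWB i hi)
    obtain ⟨w', hw1', hw2', -⟩ := hb0 u hu i' hi' _ (hWB i' hi')
    exact hN.c7 _ _ _ _ _ _ _ hw1 hw2 (hbz i hi) hadj (hbz i' hi').symm hw2'.symm hw1'.symm
  have ZuN : ¬ Z u := by
    rintro ⟨i, hi, -, h⟩
    exact h5 i hi _ (hWB i hi) _ (hbz i hi) (h ▸ hu)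
  have cle : ∀ x, c x ≤ k := by
    intro x
    by_cases hx : Z x
    · rw [cZ x hx]
    · rw [cR x hx]; exact hs.1 x
  have cp : ∀ x y, G.Adj x y → c x ≠ c y := by
    intro x y hxy
    by_cases hx : Z x
    · by_cases hy : Z y
      · exact (ZZ x y hx hy hxy).elim
      · rw [cZ x hx, cR y hy]; exact (Zk x hx y hxy).symm
    · by_cases hy : Z y
      · rw [cR x hx, cZ y hy]; exact Zk y hy x hxy.symm
      · rw [cR x hx, cR y hy]; exact hs.2.1 x y hxy
  have cu : c u = k := by rw [cR u ZuN]; exact hu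
  obtain ⟨t, ht1, ht2, ht3⟩ := drop_class G k i0 hi0.1.le c cle cp (by
    intro v hv
    by_contra hno
    push Not at hno
    have hψv := clt v i0 hi0.1 hv
    have hvWB : WB G k ψ i0 v := by
      refine ⟨hψv, ?_, ?_⟩
      · intro l hl hli
        obtain ⟨w, hw1, hw2⟩ := hno l hl.le hli
        exact ⟨w, hw1, clt w l hl hw2⟩
      · have := hd_of_colors G c v ((Finset.range (k + 1)).erase i0) (by
          intro l hl
          simp only [Finset.mem_erase, Finset.mem_range] at hl
          exact hno l (by omega) hl.1)
        have h0 := hi0.1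
        rwa [Finset.card_erase_of_mem (by simp; omega), Finset.card_range,
          Nat.add_sub_cancel] at this
    obtain ⟨w, hw1, hw2⟩ := hno k le_rfl hi0.1.ne'
    by_cases hw : Z w
    · obtain ⟨i, hi, hii, rfl⟩ := hw
      exact hsep i hi i0 hi0 hii _ _ (hWB i hi) hvWB _ (hbz i hi) hw1 (huz i hi)
    · rw [cR w hw] at hw2
      exact h5 i0 hi0 v hvWB w hw1 hw2)
  -- b-vertices for all colors other than i0
  have hB : ∀ i ≤ k, i ≠ i0 → ∃ a, c a = i ∧ ∀ l ≤ k, l ≠ i → l ≠ i0 →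
      ∃ w, G.Adj a w ∧ c w = l := by
    intro i hik hii
    by_cases hik' : i = k
    · subst hik'
      refine ⟨u, cu, ?_⟩
      intro l hl hli _
      obtain ⟨w, hw1, hw2⟩ := hsees l (by omega)
      exact ⟨w, hw1, by rw [cR w (fun h => Zu w h hw1)]; exact hw2⟩
    by_cases hi : JJ G k ψ u i
    · have hw := hWB i hi
      obtain ⟨w, hw1, hw2, -⟩ := hb0 u hu i hi _ hw
      have hbZ : ¬ Z (b i) := by
        rintro ⟨i', hi', -, h⟩
        obtain ⟨w', hw1', hw2', -⟩ := hb0 u hu i' hi' _ (hWB i' hi')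
        have hadj := hbz i' hi'
        rw [← h] at hadj
        exact hN.c5 _ _ _ _ _ hw1 hw2 hadj.symm hw2'.symm hw1'.symm
      have hnZ : ∀ x, G.Adj (b i) x → x ≠ z i → ¬ Z x := by
        rintro x hx hxz ⟨i', hi', -, rfl⟩
        have hne : i ≠ i' := by rintro rfl; exact hxz rfl
        exact hsep i hi i' hi' hne _ _ hw (hWB i' hi') _ hx (hbz i' hi') (huz i' hi')
      refine ⟨b i, by rw [cR _ hbZ]; exact hw.1, ?_⟩
      intro l hl hli _
      by_cases hlk : l = k
      · exact ⟨z i, hbz i hi, by rw [cZ _ ⟨i, hi, hii, rfl⟩, hlk]⟩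
      · obtain ⟨x, hx1, hx2⟩ := hw.2.1 l (by omega) hli
        by_cases hxz : x = z i
        · refine ⟨z' i, hbz' i hi, ?_⟩
          rw [cR _ (hnZ _ (hbz' i hi) (hzz' i hi).symm), ← heq i hi, ← hxz]
          exact hx2
        · exact ⟨x, hx1, by rw [cR _ (hnZ x hx1 hxz)]; exact hx2⟩
    · have : ∃ a, WB G k ψ i a ∧ G.Adj u a := by
        by_contra h
        push Not at h
        exact hi ⟨by omega, h⟩
      obtain ⟨a, ha, hua⟩ := this
      refine ⟨a, by rw [cR a (fun h => Zu a h hua)]; exact ha.1, ?_⟩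
      intro l hl hli _
      by_cases hlk : l = k
      · exact ⟨u, hua.symm, by rw [cu, hlk]⟩
      · obtain ⟨x, hx1, hx2⟩ := ha.2.1 l (by omega) hli
        refine ⟨x, hx1, ?_⟩
        rw [cR x ?_]; · exact hx2
        rintro ⟨i', hi', -, rfl⟩
        obtain ⟨w', hw1', hw2', -⟩ := hb0 u hu i' hi' _ (hWB i' hi')
        exact hN.c5 _ _ _ _ _ hua hx1 (hbz i' hi').symm hw2'.symm hw1'.symm
  have hBt : ∀ i < k, ∃ a, t a = i ∧ IsBVertex G k t a := by
    have h0 := hi0.1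
    intro i hi
    have key : ∀ i' ≤ k, i' ≠ i0 → (if i' = k then i0 else i') = i →
        ∃ a, t a = i ∧ IsBVertex G k t a := by
      intro i' hi' hne hii
      obtain ⟨a, ha1, ha2⟩ := hB i' hi' hne
      have hta : t a = i := by rw [ht3 a (by rw [ha1]; exact hne), ha1, hii]
      refine ⟨a, hta, ?_⟩
      intro l hl hla
      rw [hta] at hla
      by_cases hl0 : l = i0
      · obtain ⟨w, hw1, hw2⟩ := ha2 k le_rfl (by rintro rfl; simp at hii; omega) (by omega)
        exact ⟨w, hw1, by rw [ht3 w (by omega), if_pos hw2, hl0]⟩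
      · obtain ⟨w, hw1, hw2⟩ := ha2 l hl.le (by
          rintro rfl; rw [if_neg (by omega)] at hii; exact hla hii) hl0
        exact ⟨w, hw1, by rw [ht3 w (by omega), if_neg (by omega), hw2]⟩
    by_cases hi0' : i = i0
    · exact key k le_rfl (by omega) (by simp [hi0'])
    · exact key i hi.le hi0' (by rw [if_neg (by omega)])
  refine hcon ⟨t, ⟨ht1, ht2, ?_⟩, hBt⟩
  intro i hi
  obtain ⟨a, ha, -⟩ := hBt i hi
  exact ⟨a, ha⟩

theorem descend [Fintype V] (G : SimpleGraph V) (hN : NoShort G) (n : ℕ) (f : V → ℕ)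
    (hf : ∀ v, f v < n) (hfp : ∀ a b, G.Adj a b → f a ≠ f b)
    (h : ∃ c : V → ℕ, IsBColoring G (n + 1 + 1) c) : ∃ c : V → ℕ, IsBColoring G (n + 1) c := by
  classical
  obtain ⟨c, ⟨hc1, hc2, hc3⟩, hc4⟩ := h
  have hst : WState G (n + 1) c := by
    refine ⟨fun v => by have := hc1 v; omega, hc2, ?_⟩
    intro i hi
    obtain ⟨a, ha1, ha2⟩ := hc4 i (by omega)
    refine ⟨a, ha1, fun l hl hli => ha2 l (by omega) (by omega), ?_⟩
    have := hd_of_colors G c a ((Finset.range (n + 1 + 1)).erase i) (by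
      intro l hl
      simp only [Finset.mem_erase, Finset.mem_range] at hl
      exact ha2 l hl.2 (by omega))
    rwa [Finset.card_erase_of_mem (by simp; omega), Finset.card_range, Nat.add_sub_cancel] at this
  have hex : ∃ m, ∃ ψ, WState G (n + 1) ψ ∧ {v | ψ v = n + 1}.ncard = m := ⟨_, c, hst, rfl⟩
  obtain ⟨ψ, hψ, hψm⟩ := Nat.find_spec hex
  have hmin : ∀ ψ', WState G (n + 1) ψ' →
      {v | ψ v = n + 1}.ncard ≤ {v | ψ' v = n + 1}.ncard := by
    intro ψ' h'
    rw [hψm]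
    exact Nat.find_min' hex ⟨ψ', h', rfl⟩
  by_cases hu : ∃ u, ψ u = n + 1
  · obtain ⟨u, hu⟩ := hu
    exact step_final G hN n f hf hfp (n + 1) rfl ψ hψ hmin u hu
  · push Not at hu
    refine ⟨ψ, ⟨fun v => lt_of_le_of_ne (hψ.1 v) (hu v), hψ.2.1, ?_⟩, ?_⟩
    · intro i hi
      obtain ⟨b, hb⟩ := hψ.2.2 i hi
      exact ⟨b, hb.1⟩
    · intro i hi
      obtain ⟨b, hb⟩ := hψ.2.2 i hi
      exact ⟨b, hb.1, fun l hl hli => hb.2.1 l hl (by rw [← hb.1]; exact hli)⟩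

theorem colorable_of_fun (G : SimpleGraph V) (n : ℕ) (f : V → ℕ) (hf : ∀ v, f v < n)
    (hfp : ∀ a b, G.Adj a b → f a ≠ f b) : G.Colorable n :=
  ⟨SimpleGraph.Coloring.mk (fun v => (⟨f v, hf v⟩ : Fin n)) (by
    intro a b hab h
    exact hfp a b hab (by simpa using h))⟩

theorem fun_of_colorable (G : SimpleGraph V) (n : ℕ) (h : G.Colorable n) :
    ∃ f : V → ℕ, (∀ v, f v < n) ∧ ∀ a b, G.Adj a b → f a ≠ f b := by
  obtain ⟨C⟩ := h
  refine ⟨fun v => (C v : ℕ), fun v => (C v).2, fun a b hab h => C.valid hab (Fin.ext h)⟩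

/-- Graphs of girth at least 8 are b-continuous. -/
theorem bContinuous_of_eight_le_girth [Fintype V] (G : SimpleGraph V)
    (hg : (8 : ℕ∞) ≤ G.egirth) (k : ℕ)
    (h1 : G.chromaticNumber ≤ (k : ℕ∞)) (h2 : k ≤ bChrom G) :
    ∃ c : V → ℕ, IsBColoring G k c := by
  classical
  have hN := noShort_of_girth G hg
  have hcol : G.Colorable k := SimpleGraph.chromaticNumber_le_iff_colorable.1 h1
  obtain ⟨f, hf, hfp⟩ := fun_of_colorable G k hcol
  cases k with
  | zero => exact ⟨f, ⟨hf, hfp, by omega⟩, by omega⟩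
  | succ n =>
  by_cases hn : G.Colorable n
  · obtain ⟨f, hf, hfp⟩ := fun_of_colorable G n hn
    have hbdd : BddAbove {k | ∃ c : V → ℕ, IsBColoring G k c} := by
      refine ⟨Fintype.card V, ?_⟩
      rintro m ⟨c, ⟨hc1, -, hc3⟩, -⟩
      choose g hg using fun i : Fin m => hc3 i i.2
      have : Function.Injective g := by
        intro a b hab
        apply Fin.ext
        rw [← hg a, ← hg b, hab]
      simpa using Fintype.card_le_of_injective g this
    have hne : {k | ∃ c : V → ℕ, IsBColoring G k c}.Nonempty := by
      by_contra h
      rw [Set.not_nonempty_iff_eq_empty] at h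
      unfold bChrom at h2
      rw [h] at h2
      simp at h2
    have hmem : ∃ c : V → ℕ, IsBColoring G (bChrom G) c := Nat.sSup_mem hne hbdd
    have key : ∀ d, (∃ c : V → ℕ, IsBColoring G (n + d + 1) c) →
        ∃ c : V → ℕ, IsBColoring G (n + 1) c := by
      intro d
      induction d with
      | zero => exact fun h => h
      | succ d ih =>
        intro h
        exact ih (descend G hN (n + d) f (fun v => by have := hf v; omega) hfp h)
    obtain ⟨d, hd⟩ := Nat.exists_eq_add_of_le h2
    exact key d (by rw [hd] at hmem; convert hmem using 3; omega)
  · have hB : ∀ i < n + 1, ∃ u, f u = i ∧ IsBVertex G (n + 1) f u := by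
      intro i hi
      by_contra hno
      push Not at hno
      obtain ⟨t, ht1, ht2, -⟩ := drop_class G n i (by omega) f
        (fun v => by have := hf v; omega) hfp (by
          intro v hv
          have := hno v hv
          unfold IsBVertex at this
          push Not at this
          obtain ⟨j, hj1, hj2, hj3⟩ := this
          exact ⟨j, by omega, by omega, hj3⟩)
      exact hn (colorable_of_fun G n t ht1 ht2)
    refine ⟨f, ⟨hf, hfp, fun i hi => ?_⟩, hB⟩
    obtain ⟨a, ha, -⟩ := hB i hi
    exact ⟨a, ha⟩
end

section
/- If a graph G has girth at least 7, then for every integer k with 2χ(G) ≤ k ≤ b(G), G admits a b-coloring with k colors. -/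
open SimpleGraph

variable {V : Type*}

section Helpers

open Classical in
/-- The neighbor finset of `u`. -/
noncomputable def nbF [Fintype V] (G : SimpleGraph V) (u : V) : Finset V :=
  Finset.univ.filter (fun w => G.Adj u w)

lemma mem_nbF [Fintype V] (G : SimpleGraph V) (u w : V) : w ∈ nbF G u ↔ G.Adj u w := by
  simp [nbF]

/-- b-vertices (relative to the colors `< k`) of large degree. -/
def BS [Fintype V] (G : SimpleGraph V) (k : ℕ) (c : V → ℕ) (u : V) : Prop :=
  k ≤ (nbF G u).card ∧ IsBVertex G k c u

/-- Partial proper coloring (colors `< k`) in which each color has a large b-vertex. -/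
def PState [Fintype V] (G : SimpleGraph V) (k : ℕ) (c : V → ℕ) : Prop :=
  (∀ u v, G.Adj u v → c u < k → c u ≠ c v) ∧ ∀ i < k, ∃ u, c u = i ∧ BS G k c u

/-- No short cycles. -/
structure NC (G : SimpleGraph V) : Prop where
  c3 : ∀ a b c, G.Adj a b → G.Adj b c → G.Adj c a → False
  c4 : ∀ a b c d, G.Adj a b → G.Adj b c → G.Adj c d → G.Adj d a → a ≠ c → b ≠ d → False
  c5 : ∀ a b c d e, G.Adj a b → G.Adj b c → G.Adj c d → G.Adj d e → G.Adj e a → False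
  c6 : ∀ a b c d e f, G.Adj a b → G.Adj b c → G.Adj c d → G.Adj d e → G.Adj e f → G.Adj f a →
    a ≠ c → b ≠ d → c ≠ e → d ≠ f → e ≠ a → f ≠ b → False

lemma nc_of_girth (G : SimpleGraph V) (hg : (7 : ℕ∞) ≤ G.egirth) : NC G := by
  rw [SimpleGraph.le_egirth] at hg
  have key : ∀ (a : V) (w : G.Walk a a), w.IsCycle → 7 ≤ w.length := by
    intro a w hw
    exact_mod_cast hg a w hw
  have h3 : ∀ a b c, G.Adj a b → G.Adj b c → G.Adj c a → False := by
    intro a b c h1 h2 h3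
    have n1 := h1.ne
    have n2 := h2.ne
    have n3 := h3.ne
    have := key a (.cons h1 (.cons h2 (.cons h3 .nil))) (by
      rw [SimpleGraph.Walk.cons_isCycle_iff]
      simp [SimpleGraph.Walk.cons_isPath_iff]
      grind)
    simp at this
  have h5 : ∀ a b c d e, G.Adj a b → G.Adj b c → G.Adj c d → G.Adj d e → G.Adj e a → False := by
    intro a b c d e h1 h2 h4 h5 h6
    have n1 := h1.ne
    have n2 := h2.ne
    have n3 := h4.ne
    have n4 := h5.ne
    have n5 := h6.ne
    have m1 : a ≠ c := by rintro rfl; exact h3 _ _ _ h4 h5 h6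
    have m2 : b ≠ d := by rintro rfl; exact h3 _ _ _ h5 h6 h1
    have m3 : c ≠ e := by rintro rfl; exact h3 _ _ _ h6 h1 h2
    have m4 : d ≠ a := by rintro rfl; exact h3 _ _ _ h1 h2 h4
    have m5 : e ≠ b := by rintro rfl; exact h3 _ _ _ h2 h4 h5
    have := key a (.cons h1 (.cons h2 (.cons h4 (.cons h5 (.cons h6 .nil))))) (by
      rw [SimpleGraph.Walk.cons_isCycle_iff]
      simp [SimpleGraph.Walk.cons_isPath_iff]
      grind)
    simp at this
  refine ⟨h3, ?_, h5, ?_⟩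
  · intro a b c d h1 h2 h4 h5 m1 m2
    have n1 := h1.ne
    have n2 := h2.ne
    have n3 := h4.ne
    have n4 := h5.ne
    have := key a (.cons h1 (.cons h2 (.cons h4 (.cons h5 .nil)))) (by
      rw [SimpleGraph.Walk.cons_isCycle_iff]
      simp [SimpleGraph.Walk.cons_isPath_iff]
      grind)
    simp at this
  · intro a b c d e f h1 h2 h4 h5 h6 h7 m1 m2 m3 m4 m5 m6
    have n1 := h1.ne
    have n2 := h2.ne
    have n3 := h4.ne
    have n4 := h5.ne
    have n5 := h6.ne
    have n6 := h7.ne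
    have o1 : a ≠ d := by rintro rfl; exact h3 _ _ _ h1 h2 h4
    have o2 : b ≠ e := by rintro rfl; exact h3 _ _ _ h2 h4 h5
    have o3 : c ≠ f := by rintro rfl; exact h3 _ _ _ h4 h5 h6
    have := key a (.cons h1 (.cons h2 (.cons h4 (.cons h5 (.cons h6 (.cons h7 .nil)))))) (by
      rw [SimpleGraph.Walk.cons_isCycle_iff]
      simp [SimpleGraph.Walk.cons_isPath_iff]
      grind)
    simp at this

/-- A colored vertex which is not a large b-vertex has an alternative color, ignoring one
neighbor. -/
lemma exists_alt [Fintype V] (G : SimpleGraph V) (k : ℕ) (c : V → ℕ) (p q : V)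
    (hpk : c p < k) (hpq : G.Adj p q) (hB : ¬ BS G k c p) :
    ∃ a < k, a ≠ c p ∧ ∀ r, G.Adj p r → r ≠ q → c r ≠ a := by
  classical
  by_contra hcon
  push Not at hcon
  apply hB
  refine ⟨?_, ?_⟩
  · have h1 : (Finset.range k).erase (c p) ⊆ ((nbF G p).erase q).image c := by
      intro a ha
      simp only [Finset.mem_erase, Finset.mem_range] at ha
      obtain ⟨r, hr, hrq, hra⟩ := hcon a ha.2 ha.1
      simp only [Finset.mem_image, Finset.mem_erase, mem_nbF]
      exact ⟨r, ⟨hrq, hr⟩, hra⟩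
    have h2 := Finset.card_le_card h1
    have h3 := Finset.card_image_le (s := (nbF G p).erase q) (f := c)
    rw [Finset.card_erase_of_mem (Finset.mem_range.2 hpk), Finset.card_range] at h2
    have hq : q ∈ nbF G p := (mem_nbF G p q).2 hpq
    rw [Finset.card_erase_of_mem hq] at h3
    have : 0 < (nbF G p).card := Finset.card_pos.2 ⟨q, hq⟩
    omega
  · intro a ha hap
    obtain ⟨r, hr, -, hra⟩ := hcon a ha hap
    exact ⟨r, hr, hra⟩

/-- The concentrated case: some vertex with `k` large b-vertices in its neighborhood. -/
lemma case_A [Fintype V] (G : SimpleGraph V) (hG : NC G) (k n : ℕ) (hk : 0 < k)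
    (f : G.Coloring (Fin n)) (hn : 2 * n ≤ k) (c : V → ℕ)
    (hc : ∀ u v, G.Adj u v → c u < k → c u ≠ c v) (v : V) (hv : k ≤ c v)
    (y : ℕ → V) (hy : ∀ l < k, G.Adj v (y l) ∧ c (y l) = l ∧ IsBVertex G k c (y l)) :
    ∃ c : V → ℕ, IsBColoring G k c := by
  classical
  have : Nonempty V := ⟨v⟩
  have hs : ∀ l m, l < k → m < k → m ≠ l → ∃ s, G.Adj (y l) s ∧ c s = m := by
    intro l m hl hm hml
    obtain ⟨h1, h2, h3⟩ := hy l hl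
    exact h3 m hm (by rw [h2]; exact hml)
  choose! s hs using hs
  let S1 : V → Prop := fun p => ∃ l, l < k ∧ l ≠ 0 ∧ p = y l
  let S2 : V → Prop := fun p => ∃ l m, l < k ∧ l ≠ 0 ∧ m < k ∧ m ≠ 0 ∧ m ≠ l ∧ p = s l m
  let S : V → Prop := fun p => p = v ∨ S1 p ∨ S2 p
  have hsv : ∀ l m, l < k → m < k → m ≠ l → s l m ≠ v := by
    intro l m hl hm hml h
    have := (hs l m hl hm hml).2
    rw [h] at this
    omega
  have huniq : ∀ p q q', ¬ S p → S q → S q' → G.Adj p q → G.Adj p q' → q = q' := by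
    intro p q q' hp hq hq' h1 h2
    have hpv : p ≠ v := fun h => hp (Or.inl h)
    have hpy : ∀ l, l < k → l ≠ 0 → p ≠ y l := fun l h h' h'' => hp (Or.inr (Or.inl ⟨l, h, h', h''⟩))
    by_contra hne
    rcases hq with rfl | ⟨l, hl, hl0, rfl⟩ | ⟨l, m, hl, hl0, hm, hm0, hml, rfl⟩
    · rcases hq' with rfl | ⟨l', hl', hl0', rfl⟩ | ⟨l', m', hl', hl0', hm', hm0', hml', rfl⟩
      · exact hne rfl
      · exact hG.c3 _ _ _ h1 (hy l' hl').1 h2.symm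
      · exact hG.c4 _ _ _ _ h1 (hy l' hl').1 (hs l' m' hl' hm' hml').1 h2.symm (hpy l' hl' hl0') hne
    · rcases hq' with rfl | ⟨l', hl', hl0', rfl⟩ | ⟨l', m', hl', hl0', hm', hm0', hml', rfl⟩
      · exact hG.c3 _ _ _ h2 (hy l hl).1 h1.symm
      · exact hG.c4 _ _ _ _ h1 (hy l hl).1.symm (hy l' hl').1 h2.symm hpv hne
      · by_cases hll : l = l'
        · subst hll
          exact hG.c3 _ _ _ h1 (hs l m' hl' hm' hml').1 h2.symm
        · exact hG.c5 _ _ _ _ _ h1 (hy l hl).1.symm (hy l' hl').1 (hs l' m' hl' hm' hml').1 h2.symm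
    · rcases hq' with rfl | ⟨l', hl', hl0', rfl⟩ | ⟨l', m', hl', hl0', hm', hm0', hml', rfl⟩
      · exact hG.c4 _ _ _ _ h2 (hy l hl).1 (hs l m hl hm hml).1 h1.symm (hpy l hl hl0) (Ne.symm hne)
      · by_cases hll : l = l'
        · subst hll
          exact hG.c3 _ _ _ h2 (hs l m hl hm hml).1 h1.symm
        · exact hG.c5 _ _ _ _ _ h2 (hy l' hl').1.symm (hy l hl).1 (hs l m hl hm hml).1 h1.symm
      · by_cases hll : l = l'
        · subst hll
          exact hG.c4 _ _ _ _ h1 (hs l m hl hm hml).1.symm (hs l m' hl hm' hml').1 h2.symm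
            (hpy l hl hl0) hne
        · refine hG.c6 _ _ _ _ _ _ h1 (hs l m hl hm hml).1.symm (hy l hl).1.symm (hy l' hl').1
            (hs l' m' hl' hm' hml').1 h2.symm (hpy l hl hl0) (hsv l m hl hm hml) ?_
            (hsv l' m' hl' hm' hml').symm (hpy l' hl' hl0').symm (Ne.symm hne)
          intro h
          apply hll
          rw [← (hy l hl).2.1, ← (hy l' hl').2.1, h]
  let g0 : V → ℕ := fun p => if p = v then 0 else c p
  have hS : ∀ p, S p → p ≠ v → c p < k := by
    rintro p (rfl | ⟨l, hl, hl0, rfl⟩ | ⟨l, m, hl, hl0, hm, hm0, hml, rfl⟩) h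
    · exact absurd rfl h
    · rw [(hy l hl).2.1]; exact hl
    · rw [(hs l m hl hm hml).2]; exact hm
  have hP : ∀ p, ∃ a, (a = 2 * (f p : ℕ) ∨ a = 2 * (f p : ℕ) + 1) ∧
      (¬ S p → ∀ q, S q → G.Adj p q → g0 q ≠ a) := by
    intro p
    by_cases h : ∃ q, S q ∧ G.Adj p q ∧ g0 q = 2 * (f p : ℕ)
    · obtain ⟨q, hq, hpq, hqc⟩ := h
      refine ⟨_, Or.inr rfl, ?_⟩
      intro hp q' hq' hpq'
      rw [← huniq p q q' hp hq hq' hpq hpq']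
      omega
    · push Not at h
      exact ⟨_, Or.inl rfl, fun _ q hq hpq => h q hq hpq⟩
  choose a ha ha' using hP
  have hSv : ∀ q, S q → G.Adj v q → q ≠ v → c q ≠ 0 := by
    rintro p (rfl | ⟨l, hl, hl0, rfl⟩ | ⟨l, m, hl, hl0, hm, hm0, hml, rfl⟩) h hne
    · exact absurd rfl hne
    · rw [(hy l hl).2.1]; exact hl0
    · rw [(hs l m hl hm hml).2]; exact hm0
  have hgv : S v := Or.inl rfl
  have hgy : ∀ l, l < k → l ≠ 0 → S (y l) := fun l h h' => Or.inr (Or.inl ⟨l, h, h', rfl⟩)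
  have hyv : ∀ l, l < k → y l ≠ v := fun l h => (hy l h).1.ne'
  let g : V → ℕ := fun p => if S p then g0 p else a p
  have g_v : g v = 0 := by simp [g, g0, hgv]
  have g_S : ∀ p, S p → p ≠ v → g p = c p := by
    intro p h h'; simp [g, g0, h, h']
  have g_y : ∀ l, l < k → l ≠ 0 → g (y l) = l := by
    intro l h h'
    rw [g_S _ (hgy l h h') (hyv l h), (hy l h).2.1]
  have hb : ∀ i < k, ∃ u, g u = i ∧ IsBVertex G k g u := by
    intro i hi
    by_cases hi0 : i = 0
    · subst hi0
      refine ⟨v, g_v, ?_⟩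
      intro j hj hj0
      rw [g_v] at hj0
      exact ⟨y j, (hy j hj).1, g_y j hj hj0⟩
    · refine ⟨y i, g_y i hi hi0, ?_⟩
      intro j hj hji
      rw [g_y i hi hi0] at hji
      by_cases hj0 : j = 0
      · subst hj0
        exact ⟨v, (hy i hi).1.symm, g_v⟩
      · refine ⟨s i j, (hs i j hi hj hji).1, ?_⟩
        rw [g_S _ (Or.inr (Or.inr ⟨i, j, hi, hi0, hj, hj0, hji, rfl⟩)) (hsv i j hi hj hji)]
        exact (hs i j hi hj hji).2
  refine ⟨g, ⟨?_, ?_, fun i hi => (hb i hi).imp fun _ h => h.1⟩, hb⟩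
  · intro p
    by_cases hp : S p
    · by_cases hpv : p = v
      · rw [hpv, g_v]; exact hk
      · rw [g_S p hp hpv]; exact hS p hp hpv
    · have : g p = a p := by simp [g, hp]
      rw [this]
      have := ha p
      have := (f p).2
      omega
  · intro p q hpq
    by_cases hp : S p <;> by_cases hq : S q
    · by_cases hpv : p = v
      · subst hpv
        rw [g_v, g_S q hq hpq.ne']
        exact (hSv q hq hpq hpq.ne').symm
      · by_cases hqv : q = v
        · subst hqv
          rw [g_v, g_S p hp hpq.ne]
          exact hSv p hp hpq.symm hpq.ne
        · rw [g_S p hp hpv, g_S q hq hqv]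
          exact hc p q hpq (hS p hp hpv)
    · have := ha' q hq p hp hpq.symm
      simpa [g, hp, hq] using this
    · have := ha' p hp q hq hpq
      simpa [g, hp, hq] using this.symm
    · have h1 := ha p
      have h2 := ha q
      have h3 : (f p : ℕ) ≠ f q := fun h => f.valid hpq (Fin.ext h)
      simp only [g, hp, hq, if_false]
      omega

/-- The main recoloring step. -/
lemma step [Fintype V] (G : SimpleGraph V) (hG : NC G) (k : ℕ) (c : V → ℕ)
    (hc : PState G k c) (v : V) (hv : k ≤ c v)
    (hmin : ∀ c', PState G k c' → (∀ p, k ≤ c' p → k ≤ c p) → k ≤ c' v) :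
    ∀ i < k, ∃ y, G.Adj v y ∧ c y = i ∧ BS G k c y := by
  classical
  obtain ⟨hprop, hbs⟩ := hc
  have hj : ∀ i < k, (∀ m, G.Adj v m → c m = i → ¬ BS G k c m) → ∃ j < k, j ≠ i ∧
      ∀ u, c u = j → BS G k c u → ∃ w, G.Adj v w ∧ c w = i ∧ G.Adj u w ∧
        ∀ w', G.Adj u w' → c w' = i → w' = w := by
    intro i hi hM
    by_contra hcon
    push Not at hcon
    have halt : ∀ m, ∃ a, (G.Adj v m → c m = i → a < k ∧ a ≠ i ∧
        ∀ r, G.Adj m r → r ≠ v → c r ≠ a) := by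
      intro m
      by_cases h : G.Adj v m ∧ c m = i
      · obtain ⟨a, h1, h2, h3⟩ := exists_alt G k c m v (h.2 ▸ hi) h.1.symm (hM m h.1 h.2)
        exact ⟨a, fun _ _ => ⟨h1, h.2 ▸ h2, h3⟩⟩
      · exact ⟨0, fun h1 h2 => absurd ⟨h1, h2⟩ h⟩
    choose a ha using halt
    let c' : V → ℕ := fun p => if p = v then i else if G.Adj v p ∧ c p = i then a p else c p
    have cv : c' v = i := by simp [c']
    have cu : ∀ p, p ≠ v → ¬ (G.Adj v p ∧ c p = i) → c' p = c p := by
      intro p h1 h2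
      simp only [c', h1, h2, if_false]
    have cm : ∀ p, G.Adj v p → c p = i → c' p = a p := by
      intro p h1 h2
      have := h1.ne'
      simp [c', this, h1, h2]
    have := hmin c' ⟨?_, ?_⟩ ?_
    · omega
    · have key : ∀ p q, G.Adj p q → (p = v ∨ (G.Adj v p ∧ c p = i)) → c' p ≠ c' q := by
        rintro p q hpq (rfl | ⟨h1, h2⟩)
        · rw [cv]
          by_cases hq : c q = i
          · rw [cm q hpq hq]; exact (ha q hpq hq).2.1.symm
          · rw [cu q hpq.ne' (fun h => hq h.2)]; exact fun h => hq h.symm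
        · rw [cm p h1 h2]
          by_cases hqv : q = v
          · rw [hqv, cv]; exact (ha p h1 h2).2.1
          · rw [cu q hqv (fun h => hG.c3 _ _ _ h1 hpq h.1.symm)]
            exact ((ha p h1 h2).2.2 q hpq hqv).symm
      intro p q hpq hpk
      by_cases hp : p = v ∨ (G.Adj v p ∧ c p = i)
      · exact key p q hpq hp
      by_cases hq : q = v ∨ (G.Adj v q ∧ c q = i)
      · exact (key q p hpq.symm hq).symm
      push Not at hp hq
      rw [cu p hp.1 (fun h => hp.2 h.1 h.2)] at hpk ⊢
      rw [cu q hq.1 (fun h => hq.2 h.1 h.2)]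
      exact hprop p q hpq hpk
    · intro l hl
      have huv : ∀ u, c u < k → u ≠ v := by rintro u hu rfl; omega
      by_cases hli : l = i
      · subst hli
        obtain ⟨u, hu, hd, hub⟩ := hbs l hl
        have hcu : c' u = l := by
          rw [cu u (huv u (by omega)) (fun h => hM u h.1 h.2 ⟨hd, hub⟩), hu]
        refine ⟨u, hcu, hd, ?_⟩
        intro m hm hml
        rw [hcu] at hml
        obtain ⟨z, hz, hzm⟩ := hub m hm (by omega)
        refine ⟨z, hz, ?_⟩
        rw [cu z (huv z (by omega)) (fun h => hml (by rw [← hzm, h.2])), hzm]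
      · obtain ⟨u, hu, hB, hw⟩ := hcon l hl hli
        have hcu : c' u = l := by
          rw [cu u (huv u (by omega)) (fun h => hli (by rw [← hu, h.2])), hu]
        refine ⟨u, hcu, hB.1, ?_⟩
        intro m hm hml
        rw [hcu] at hml
        obtain ⟨z, hz, hzm⟩ := hB.2 m hm (by omega)
        by_cases hmi : m = i
        · subst hmi
          by_cases hvz : G.Adj v z
          · obtain ⟨z', hz', hzm', hne⟩ := hw z hvz hzm hz
            refine ⟨z', hz', ?_⟩
            rw [cu z' (huv z' (by omega)) ?_, hzm']
            rintro ⟨h, -⟩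
            exact hG.c4 v z u z' hvz hz.symm hz' h.symm (huv u (by omega)).symm hne.symm
          · refine ⟨z, hz, ?_⟩
            rw [cu z (huv z (by omega)) (fun h => hvz h.1), hzm]
        · refine ⟨z, hz, ?_⟩
          rw [cu z (huv z (by omega)) (fun h => hmi (by rw [← hzm, h.2])), hzm]
    · intro p hp
      by_cases hpv : p = v
      · rw [hpv]; exact hv
      · by_cases h : G.Adj v p ∧ c p = i
        · rw [cm p h.1 h.2] at hp
          have := (ha p h.1 h.2).1
          omega
        · rwa [cu p hpv h] at hp
  have huv : ∀ u, c u < k → u ≠ v := by rintro u hu rfl; omega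
  by_contra hcon
  push Not at hcon
  obtain ⟨i, hik, hiM⟩ := hcon
  let I : Finset ℕ := (Finset.range k).filter (fun i => ∀ m, G.Adj v m → c m = i → ¬ BS G k c m)
  have hI : ∀ l, l ∈ I ↔ l < k ∧ ∀ m, G.Adj v m → c m = l → ¬ BS G k c m := by
    intro l; simp [I]
  have hiI : i ∈ I := (hI i).2 ⟨hik, hiM⟩
  have hj' : ∀ l ∈ I, ∃ j < k, j ≠ l ∧
      ∀ u, c u = j → BS G k c u → ∃ w, G.Adj v w ∧ c w = l ∧ G.Adj u w ∧
        ∀ w', G.Adj u w' → c w' = l → w' = w := fun l hl => hj l ((hI l).1 hl).1 ((hI l).1 hl).2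
  choose! j hjk hjne hjB using hj'
  have hmaps : ∀ l ∈ I, j l ∈ I := by
    intro l hl
    refine (hI _).2 ⟨hjk l hl, ?_⟩
    intro m hvm hcm hB
    obtain ⟨w, h1, -, h2, -⟩ := hjB l hl m hcm hB
    exact hG.c3 _ _ _ hvm h2 h1.symm
  have hinj : Set.InjOn j I := by
    intro l hl l' hl' hll
    obtain ⟨u, hu, hB⟩ := hbs (j l) (hjk l hl)
    obtain ⟨w, h1, h2, h3, -⟩ := hjB l hl u hu hB
    obtain ⟨w', h1', h2', h3', -⟩ := hjB l' hl' u (hu.trans hll) hB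
    by_contra hne
    refine hG.c4 v w u w' h1 h3.symm h3' h1'.symm (huv u (by rw [hu]; exact hjk l hl)).symm ?_
    rintro rfl
    exact hne (by rw [← h2, ← h2'])
  have hsurj : ∀ l ∈ I, ∃ l' ∈ I, j l' = l := by
    have := Finset.surjOn_of_injOn_of_card_le j (s := I) (t := I)
      (fun l hl => hmaps l hl) hinj le_rfl
    intro l hl
    obtain ⟨l', h, h'⟩ := this hl
    exact ⟨l', h, h'⟩
  have hconc : ∀ l ∈ I, ∀ u, c u = l → BS G k c u →
      ∃ w, G.Adj v w ∧ G.Adj u w ∧ c w ∈ I ∧ j (c w) = l := by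
    intro l hl u hu hB
    obtain ⟨l', hl', rfl⟩ := hsurj l hl
    obtain ⟨w, h1, h2, h3, -⟩ := hjB l' hl' u hu hB
    exact ⟨w, h1, h3, h2 ▸ hl', by rw [h2]⟩
  obtain ⟨u, hu, hBu⟩ := hbs (j i) (hjk i hiI)
  obtain ⟨w, hvw, hcw, huw, hwu⟩ := hjB i hiI u hu hBu
  have hji := hjne i hiI
  have hjik := hjk i hiI
  have hjI := hmaps i hiI
  have hU : ∀ l, l < k → ∃ p, c p = l ∧ BS G k c p ∧ (l ∉ I → G.Adj v p) := by
    intro l hl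
    by_cases h : l ∈ I
    · obtain ⟨p, h1, h2⟩ := hbs l hl
      exact ⟨p, h1, h2, fun h' => absurd h h'⟩
    · have h' := h
      rw [hI] at h'
      push Not at h'
      obtain ⟨p, h1, h2, h3⟩ := h' hl
      exact ⟨p, h2, h3, fun _ => h1⟩
  have : Nonempty V := ⟨v⟩
  choose! U hUc hUB hUv using hU
  have hs : ∀ l, l < k → l ≠ i → ∃ s, G.Adj (U l) s ∧ c s = i := by
    intro l hl hli
    exact (hUB l hl).2 i hik (by rw [hUc l hl]; exact hli.symm)
  choose! s hsU hsc using hs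
  -- the choice of x
  have hx : ∃ x, G.Adj u x ∧ x ≠ w ∧
      (k ≤ c x ∨ c x ∈ I ∨ ∃ x', x' ≠ x ∧ G.Adj u x' ∧ c x' = c x) ∧
      ∀ l ∈ I, l ≠ i → l ≠ j i → ¬ G.Adj x (s l) := by
    let N := (nbF G u).erase w
    let Q : V → Prop := fun x => k ≤ c x ∨ c x ∈ I ∨ ∃ x', x' ≠ x ∧ G.Adj u x' ∧ c x' = c x
    have hN : ∀ x, x ∈ N ↔ x ≠ w ∧ G.Adj u x := by
      intro x; simp [N, mem_nbF]
    have hNc : k ≤ N.card + 1 := by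
      have hw : w ∈ nbF G u := (mem_nbF G u w).2 huw
      have : N.card + 1 = (nbF G u).card := Finset.card_erase_add_one hw
      rw [this]; exact hBu.1
    have hsplit := Finset.card_filter_add_card_filter_not (s := N) Q
    have hIr : I ⊆ Finset.range k := Finset.filter_subset _ _
    have hY : (N.filter (fun x => ¬ Q x)).card ≤ (Finset.range k \ I).card := by
      apply Finset.card_le_card_of_injOn c
      · intro x hx
        have hx' := (Finset.mem_filter.1 hx).2
        simp only [Q, not_or, not_le] at hx'
        simp [hx'.1, hx'.2.1]
      · intro x hx y hy hxy
        have hx' := (Finset.mem_filter.1 hx).2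
        have hy' := (hN y).1 (Finset.mem_filter.1 hy).1
        by_contra hne
        exact hx' (Or.inr (Or.inr ⟨y, fun h => hne h.symm, hy'.2, hxy.symm⟩))
    rw [Finset.card_sdiff_of_subset hIr, Finset.card_range] at hY
    have hIk := Finset.card_le_card hIr
    rw [Finset.card_range] at hIk
    by_contra hno
    push Not at hno
    have hbl : ∀ x, x ∈ N.filter Q → ∃ l ∈ I, l ≠ i ∧ l ≠ j i ∧ G.Adj x (s l) := by
      intro x hx
      obtain ⟨h1, h2⟩ := Finset.mem_filter.1 hx
      obtain ⟨h3, h4⟩ := (hN x).1 h1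
      exact hno x h4 h3 h2
    choose! b hbI hbi hbj hbs' using hbl
    have hX : (N.filter Q).card ≤ ((I.erase i).erase (j i)).card := by
      apply Finset.card_le_card_of_injOn b
      · intro x hx
        simp only [Finset.coe_erase, Set.mem_sdiff, Set.mem_singleton_iff, Finset.mem_coe]
        exact ⟨⟨hbI x hx, hbi x hx⟩, hbj x hx⟩
      · intro x hx y hy hxy
        by_contra hne
        have hx' := (hN x).1 (Finset.mem_filter.1 hx).1
        have hy' := (hN y).1 (Finset.mem_filter.1 hy).1
        have h1 := hbs' x hx
        have h2 := hbs' y hy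
        rw [← hxy] at h2
        refine hG.c4 u x (s (b x)) y hx'.2 h1 h2.symm hy'.2.symm ?_ hne
        intro h
        have := hsc (b x) ((hI _).1 (hbI x hx)).1 (hbi x hx)
        rw [← h, hu] at this
        exact hji this
    rw [Finset.card_erase_of_mem (Finset.mem_erase.2 ⟨hji, hjI⟩),
      Finset.card_erase_of_mem hiI] at hX
    have h2 : 2 ≤ I.card := by
      have : ({i, j i} : Finset ℕ) ⊆ I := by
        intro z hz
        simp only [Finset.mem_insert, Finset.mem_singleton] at hz
        rcases hz with rfl | rfl
        · exact hiI
        · exact hjI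
      have h3 := Finset.card_le_card this
      rw [Finset.card_pair hji.symm] at h3
      exact h3
    omega
  obtain ⟨x, hux, hxw, hxQ, hxs⟩ := hx
  have hvu : v ≠ u := (huv u (by omega)).symm
  have hnvu : ¬ G.Adj v u := fun h => hG.c3 _ _ _ h huw hvw.symm
  have hnvx : ¬ G.Adj v x := fun h => hG.c4 v w u x hvw huw.symm hux h.symm hvu hxw.symm
  have hxv : x ≠ v := by rintro rfl; exact hnvu hux.symm
  have hmx : ∀ m, G.Adj v m → ¬ G.Adj m x := by
    intro m hm h
    exact hG.c5 v w u x m hvw huw.symm hux h.symm hm.symm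
  have hxi : c x ≠ i := fun h => hxw (hwu x hux h)
  have hxj : c x ≠ j i := by
    have := hprop u x hux (by omega)
    omega
  have hcc : ∃ d < k, d ≠ i ∧ d ≠ j i ∧ (∀ t, G.Adj w t → c t = d → ¬ BS G k c t) ∧
      ∀ m < k, m ≠ j i → m ≠ i → m = d ∨ ∃ x', G.Adj u x' ∧ x' ≠ x ∧ x' ≠ w ∧ c x' = m := by
    by_cases hxI : c x ∈ I
    · refine ⟨c x, ((hI _).1 hxI).1, hxi, hxj, ?_, ?_⟩
      · intro t hwt hct hBt
        obtain ⟨w', h1, h2, h3, h4⟩ := hconc (c x) hxI t hct hBt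
        by_cases hww : w' = w
        · subst hww
          rw [hcw] at h4
          exact hxj h4.symm
        · exact hG.c4 v w t w' hvw hwt h2 h1.symm
            (huv t (by rw [hct]; exact ((hI _).1 hxI).1)).symm (Ne.symm hww)
      · intro m hm hmj hmi
        by_cases hmx' : m = c x
        · exact Or.inl hmx'
        · obtain ⟨x', h1, h2⟩ := hBu.2 m hm (by omega)
          refine Or.inr ⟨x', h1, ?_, ?_, h2⟩
          · rintro rfl; exact hmx' h2.symm
          · rintro rfl; exact hmi (by omega)
    · obtain ⟨d, hd, hdi, hdn⟩ := exists_alt G k c w v (by omega) hvw.symm (hiM w hvw hcw)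
      refine ⟨d, hd, by omega, ?_, ?_, ?_⟩
      · have := hdn u huw.symm hvu.symm
        omega
      · intro t hwt hct
        exact absurd hct (hdn t hwt (huv t (by omega)))
      · intro m hm hmj hmi
        obtain ⟨x', h1, h2⟩ := hBu.2 m hm (by omega)
        have hx'w : ∀ z, c z = m → z ≠ w := by rintro z hz rfl; omega
        by_cases hx'x : x' = x
        · subst hx'x
          rcases hxQ with h | h | ⟨z, hz, huz, hcz⟩
          · omega
          · exact absurd h hxI
          · exact Or.inr ⟨z, huz, hz, hx'w z (by omega), by omega⟩
        · exact Or.inr ⟨x', h1, hx'x, hx'w x' h2, h2⟩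
  obtain ⟨d, hdk, hdi, hdj, hdB, hdu⟩ := hcc
  -- alternative colors
  have haltM : ∀ m, ∃ a, (G.Adj v m → c m = i → a < k ∧ a ≠ i ∧
      ∀ r, G.Adj m r → r ≠ v → c r ≠ a) := by
    intro m
    by_cases h : G.Adj v m ∧ c m = i
    · obtain ⟨a, h1, h2, h3⟩ := exists_alt G k c m v (by omega) h.1.symm (hiM m h.1 h.2)
      exact ⟨a, fun _ _ => ⟨h1, h.2 ▸ h2, h3⟩⟩
    · exact ⟨0, fun h1 h2 => absurd ⟨h1, h2⟩ h⟩
  choose a ha using haltM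
  have haltY : ∀ m, ∃ a, (G.Adj x m → c m = i → a < k ∧ a ≠ i ∧
      ∀ r, G.Adj m r → r ≠ x → c r ≠ a) := by
    intro m
    by_cases h : G.Adj x m ∧ c m = i
    · obtain ⟨a, h1, h2, h3⟩ := exists_alt G k c m x (by omega) h.1.symm (by
        intro hB
        obtain ⟨w', q1, q2, q3, q4⟩ := hconc i hiI m h.2 hB
        refine hG.c6 v w u x m w' hvw huw.symm hux h.1 q2 q1.symm hvu hxw.symm ?_ ?_ ?_ ?_
        · rintro rfl; omega
        · rintro rfl; exact hnvx q1
        · exact huv m (by omega)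
        · rintro rfl
          rw [hcw] at q4
          exact hji q4)
      exact ⟨a, fun _ _ => ⟨h1, h.2 ▸ h2, h3⟩⟩
    · exact ⟨0, fun h1 h2 => absurd ⟨h1, h2⟩ h⟩
  choose b hb using haltY
  have haltT : ∀ m, ∃ a, (G.Adj w m → c m = d → a < k ∧ a ≠ d ∧
      ∀ r, G.Adj m r → r ≠ w → c r ≠ a) := by
    intro m
    by_cases h : G.Adj w m ∧ c m = d
    · obtain ⟨a, h1, h2, h3⟩ := exists_alt G k c m w (by omega) h.1.symm (hdB m h.1 h.2)
      exact ⟨a, fun _ _ => ⟨h1, h.2 ▸ h2, h3⟩⟩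
    · exact ⟨0, fun h1 h2 => absurd ⟨h1, h2⟩ h⟩
  choose e he using haltT
  let c' : V → ℕ := fun p => if p = v then i else if p = x then i else if p = w then d else
    if G.Adj v p ∧ c p = i then a p else if G.Adj x p ∧ c p = i then b p else
    if G.Adj w p ∧ c p = d then e p else c p
  have hwv : w ≠ v := hvw.ne'
  have cv : c' v = i := by simp [c']
  have cx : c' x = i := by simp [c']
  have cw : c' w = d := by simp [c', hwv, hxw.symm]
  have cM : ∀ p, G.Adj v p → c p = i → p ≠ w → c' p = a p := by
    intro p h1 h2 h3
    have h4 : p ≠ x := by rintro rfl; exact hnvx h1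
    simp [c', h1.ne', h4, h3, h1, h2]
  have cY : ∀ p, G.Adj x p → c p = i → c' p = b p := by
    intro p h1 h2
    have h3 : ¬ G.Adj v p := fun h => hmx p h h1.symm
    have h4 : p ≠ w := by rintro rfl; exact h3 hvw
    have h5 : p ≠ v := huv p (by omega)
    simp [c', h1.ne', h3, h4, h5, h1, h2]
  have cT : ∀ p, G.Adj w p → c p = d → c' p = e p := by
    intro p h1 h2
    have h3 : p ≠ x := by rintro rfl; exact hmx w hvw h1
    have h5 : p ≠ v := huv p (by omega)
    have h6 : c p ≠ i := by omega
    simp only [c', h3, h5, h6, h1.ne', h1, h2, if_false, and_false, and_self, if_true, hdi]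
  have cO : ∀ p, p ≠ v → p ≠ x → p ≠ w → ¬ (G.Adj v p ∧ c p = i) → ¬ (G.Adj x p ∧ c p = i) →
      ¬ (G.Adj w p ∧ c p = d) → c' p = c p := by
    intro p h1 h2 h3 h4 h5 h6
    simp only [c', h1, h2, h3, h4, h5, h6, if_false]
  have hcat : ∀ p, p = v ∨ p = x ∨ p = w ∨ (G.Adj v p ∧ c p = i ∧ p ≠ w) ∨ (G.Adj x p ∧ c p = i) ∨
      (G.Adj w p ∧ c p = d) ∨ (p ≠ v ∧ p ≠ x ∧ p ≠ w ∧ ¬ (G.Adj v p ∧ c p = i) ∧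
        ¬ (G.Adj x p ∧ c p = i) ∧ ¬ (G.Adj w p ∧ c p = d)) := by
    intro p; tauto
  have hxT : ∀ t, G.Adj w t → c t = d → ¬ G.Adj x t := by
    intro t h1 h2 h3
    refine hG.c4 t w u x h1.symm huw.symm hux h3 ?_ hxw.symm
    rintro rfl; omega
  have hYT : ∀ y t, G.Adj x y → G.Adj w t → ¬ G.Adj y t := by
    intro y t h1 h2 h3
    exact hG.c5 w u x y t huw.symm hux h1 h3 h2.symm
  have hMT : ∀ m t, G.Adj v m → m ≠ w → G.Adj w t → t ≠ v → ¬ G.Adj m t := by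
    intro m t h1 h2 h3 h4 h5
    exact hG.c4 v m t w h1 h5 h3.symm hvw.symm h4.symm h2
  have hMM : ∀ m m', G.Adj v m → G.Adj v m' → ¬ G.Adj m m' := by
    intro m m' h1 h2 h3
    exact hG.c3 _ _ _ h1 h3 h2.symm
  have hii : ∀ p q, G.Adj p q → c p = i → c q ≠ i := by
    intro p q h h1 h2
    exact hprop p q h (by omega) (by omega)
  have := hmin c' ⟨?_, ?_⟩ ?_
  · omega
  · have key : ∀ p q, G.Adj p q → ¬ (p ≠ v ∧ p ≠ x ∧ p ≠ w ∧ ¬ (G.Adj v p ∧ c p = i) ∧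
        ¬ (G.Adj x p ∧ c p = i) ∧ ¬ (G.Adj w p ∧ c p = d)) → c' p ≠ c' q := by
      intro p q hpq hp
      have hqcat := hcat q
      rcases hcat p with rfl | rfl | rfl | ⟨p1, p2, p3⟩ | ⟨p1, p2⟩ | ⟨p1, p2⟩ | hO
      · rw [cv]
        rcases hqcat with rfl | rfl | rfl | ⟨q1, q2, q3⟩ | ⟨q1, q2⟩ | ⟨q1, q2⟩ |
          ⟨q1, q2, q3, q4, q5, q6⟩
        · exact absurd rfl hpq.ne
        · exact absurd hpq hnvx
        · rw [cw]; exact hdi.symm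
        · rw [cM q q1 q2 q3]; exact (ha q q1 q2).2.1.symm
        · exact absurd q1.symm (hmx q hpq)
        · exact absurd q1 (hMM _ _ hvw hpq)
        · rw [cO q q1 q2 q3 q4 q5 q6]; exact fun h => q4 ⟨hpq, h.symm⟩
      · rw [cx]
        rcases hqcat with rfl | rfl | rfl | ⟨q1, q2, q3⟩ | ⟨q1, q2⟩ | ⟨q1, q2⟩ |
          ⟨q1, q2, q3, q4, q5, q6⟩
        · exact absurd hpq.symm hnvx
        · exact absurd rfl hpq.ne
        · exact absurd hpq.symm (hmx _ hvw)
        · exact absurd hpq.symm (hmx _ q1)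
        · rw [cY q q1 q2]; exact (hb q q1 q2).2.1.symm
        · exact absurd hpq (hxT q q1 q2)
        · rw [cO q q1 q2 q3 q4 q5 q6]; exact fun h => q5 ⟨hpq, h.symm⟩
      · rw [cw]
        rcases hqcat with rfl | rfl | rfl | ⟨q1, q2, q3⟩ | ⟨q1, q2⟩ | ⟨q1, q2⟩ |
          ⟨q1, q2, q3, q4, q5, q6⟩
        · rw [cv]; exact hdi
        · exact absurd hpq (hmx _ hvw)
        · exact absurd rfl hpq.ne
        · exact absurd q2 (hii _ _ hpq hcw)
        · exact absurd q2 (hii _ _ hpq hcw)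
        · rw [cT q q1 q2]; exact (he q q1 q2).2.1.symm
        · rw [cO q q1 q2 q3 q4 q5 q6]; exact fun h => q6 ⟨hpq, h.symm⟩
      · rw [cM p p1 p2 p3]
        rcases hqcat with rfl | rfl | rfl | ⟨q1, q2, q3⟩ | ⟨q1, q2⟩ | ⟨q1, q2⟩ |
          ⟨q1, q2, q3, q4, q5, q6⟩
        · rw [cv]; exact (ha p p1 p2).2.1
        · exact absurd hpq (hmx _ p1)
        · exact absurd hpq (hMM _ _ p1 hvw)
        · exact absurd q2 (hii _ _ hpq p2)
        · exact absurd q2 (hii _ _ hpq p2)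
        · exact absurd hpq (hMT _ _ p1 p3 q1 (huv q (by omega)))
        · rw [cO q q1 q2 q3 q4 q5 q6]; exact ((ha p p1 p2).2.2 q hpq q1).symm
      · rw [cY p p1 p2]
        rcases hqcat with rfl | rfl | rfl | ⟨q1, q2, q3⟩ | ⟨q1, q2⟩ | ⟨q1, q2⟩ |
          ⟨q1, q2, q3, q4, q5, q6⟩
        · exact absurd p1.symm (hmx _ hpq.symm)
        · rw [cx]; exact (hb p p1 p2).2.1
        · exact absurd hcw (hii _ _ hpq p2)
        · exact absurd q2 (hii _ _ hpq p2)
        · exact absurd q2 (hii _ _ hpq p2)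
        · exact absurd hpq (hYT _ _ p1 q1)
        · rw [cO q q1 q2 q3 q4 q5 q6]; exact ((hb p p1 p2).2.2 q hpq q2).symm
      · rw [cT p p1 p2]
        rcases hqcat with rfl | rfl | rfl | ⟨q1, q2, q3⟩ | ⟨q1, q2⟩ | ⟨q1, q2⟩ |
          ⟨q1, q2, q3, q4, q5, q6⟩
        · exact absurd p1 (hMM _ _ hvw hpq.symm)
        · exact absurd hpq.symm (hxT _ p1 p2)
        · rw [cw]; exact (he p p1 p2).2.1
        · exact absurd hpq.symm (hMT _ _ q1 q3 p1 (huv p (by omega)))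
        · exact absurd hpq.symm (hYT _ _ q1 p1)
        · exact absurd (p2.trans q2.symm) (hprop p q hpq (by omega))
        · rw [cO q q1 q2 q3 q4 q5 q6]; exact ((he p p1 p2).2.2 q hpq q3).symm
      · exact absurd hO hp
    intro p q hpq hpk
    by_cases hp : (p ≠ v ∧ p ≠ x ∧ p ≠ w ∧ ¬ (G.Adj v p ∧ c p = i) ∧
        ¬ (G.Adj x p ∧ c p = i) ∧ ¬ (G.Adj w p ∧ c p = d))
    · by_cases hq : (q ≠ v ∧ q ≠ x ∧ q ≠ w ∧ ¬ (G.Adj v q ∧ c q = i) ∧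
        ¬ (G.Adj x q ∧ c q = i) ∧ ¬ (G.Adj w q ∧ c q = d))
      · obtain ⟨p1, p2, p3, p4, p5, p6⟩ := hp
        obtain ⟨q1, q2, q3, q4, q5, q6⟩ := hq
        rw [cO p p1 p2 p3 p4 p5 p6] at hpk ⊢
        rw [cO q q1 q2 q3 q4 q5 q6]
        exact hprop p q hpq hpk
      · exact (key q p hpq.symm hq).symm
    · exact key p q hpq hp
  · intro l hl
    by_cases hlj : l = j i
    · subst hlj
      have hcu : c' u = j i := by
        rw [cO u hvu.symm hux.ne huw.ne (fun h => hnvu h.1) (fun h => by omega)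
          (fun h => by omega), hu]
      refine ⟨u, hcu, hBu.1, ?_⟩
      intro m hm hmj
      rw [hcu] at hmj
      by_cases hmi : m = i
      · exact ⟨x, hux, by rw [cx, hmi]⟩
      rcases hdu m hm hmj hmi with rfl | ⟨x', h1, h2, h3, h4⟩
      · exact ⟨w, huw, cw⟩
      · refine ⟨x', h1, ?_⟩
        rw [cO x' (huv x' (by omega)) h2 h3 (fun h => by omega) (fun h => by omega)
          (fun h => hG.c3 _ _ _ h1 h.1.symm huw.symm), h4]
    have hpl := hUc l hl
    have hpB := hUB l hl
    by_cases hlI : l ∈ I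
    · obtain ⟨w', hvw', hpw', hwI, hjw⟩ := hconc l hlI (U l) hpl hpB
      have hww' : w' ≠ w := by
        rintro rfl
        rw [hcw] at hjw
        exact hlj hjw.symm
      have hpv : U l ≠ v := huv _ (by omega)
      have hpu : U l ≠ u := by intro h; rw [h] at hpl; omega
      have hpx : ¬ G.Adj (U l) x := by
        intro h
        refine hG.c6 v w u x (U l) w' hvw huw.symm hux h.symm hpw' hvw'.symm hvu hxw.symm hpu.symm
          ?_ hpv hww'
        rintro rfl; exact hnvx hvw'
      have hpw : ¬ G.Adj (U l) w := fun h =>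
        hG.c4 v w (U l) w' hvw h.symm hpw' hvw'.symm hpv.symm hww'.symm
      have hnvp : ¬ G.Adj v (U l) := fun h => hG.c3 _ _ _ h hpw' hvw'.symm
      have hcp : c' (U l) = l := by
        rw [cO (U l) hpv ?_ ?_ (fun h => hnvp h.1) (fun h => hpx h.1.symm)
          (fun h => hpw h.1.symm), hpl]
        · intro h; rw [h] at hpw'; exact hmx w' hvw' hpw'.symm
        · intro h; rw [h] at hnvp; exact hnvp hvw
      have hzw : ∀ z, G.Adj (U l) z → ¬ G.Adj w z := fun z h1 h2 =>
        hG.c5 v w z (U l) w' hvw h2 h1.symm hpw' hvw'.symm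
      refine ⟨U l, hcp, hpB.1, ?_⟩
      intro m hm hml
      rw [hcp] at hml
      by_cases hmi : m = i
      · have hli : l ≠ i := by omega
        have h1 := hsU l hl hli
        have h2 := hsc l hl hli
        refine ⟨s l, h1, ?_⟩
        rw [cO (s l) (huv _ (by omega)) ?_ ?_ ?_ (fun h => hxs l hlI hli hlj h.1)
          (fun h => hzw _ h1 h.1), h2, hmi]
        · intro h; rw [h] at h1; exact hpx h1
        · intro h; rw [h] at h1; exact hpw h1
        · rintro ⟨h, -⟩
          refine hG.c4 v (s l) (U l) w' h h1.symm hpw' hvw'.symm hpv.symm ?_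
          intro h'
          rw [← h', h2] at hjw
          exact hlj hjw.symm
      · obtain ⟨z, h1, h2⟩ := hpB.2 m hm (by omega)
        refine ⟨z, h1, ?_⟩
        rw [cO z (huv _ (by omega)) ?_ ?_ (fun h => by omega) (fun h => by omega)
          (fun h => hzw _ h1 h.1), h2]
        · intro h; rw [h] at h1; exact hpx h1
        · intro h; rw [h] at h1; exact hpw h1
    · have hvp := hUv l hl hlI
      have hpv : U l ≠ v := hvp.ne'
      have hpx : U l ≠ x := by intro h; rw [h] at hvp; exact hnvx hvp
      have hli : l ≠ i := by rintro rfl; exact hlI hiI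
      have hpw : U l ≠ w := by intro h; rw [h] at hpl; omega
      have hpu : ¬ G.Adj (U l) u := fun h =>
        hG.c4 u w v (U l) huw hvw.symm hvp h hvu.symm hpw.symm
      have hcp : c' (U l) = l := by
        rw [cO (U l) hpv hpx hpw (fun h => by omega) (fun h => by omega)
          (fun h => hMM _ _ hvw hvp h.1), hpl]
      refine ⟨U l, hcp, hpB.1, ?_⟩
      intro m hm hml
      rw [hcp] at hml
      obtain ⟨z, h1, h2⟩ := hpB.2 m hm (by omega)
      have hzv : z ≠ v := huv _ (by omega)
      refine ⟨z, h1, ?_⟩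
      rw [cO z hzv ?_ ?_ (fun h => hMM _ _ hvp h.1 h1) ?_ ?_, h2]
      · rintro rfl; exact hmx _ hvp h1
      · rintro rfl; exact hMM _ _ hvp hvw h1
      · rintro ⟨h, -⟩
        refine hG.c6 v w u x z (U l) hvw huw.symm hux h h1.symm hvp.symm hvu hxw.symm ?_ hpx.symm
          hzv hpw
        rintro rfl; exact hpu h1
      · rintro ⟨h, -⟩
        exact hMT _ _ hvp hpw h hzv h1
  · intro p hp
    rcases hcat p with rfl | rfl | rfl | ⟨h1, h2, h3⟩ | ⟨h1, h2⟩ | ⟨h1, h2⟩ |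
      ⟨h1, h2, h3, h4, h5, h6⟩
    · exact hv
    · omega
    · omega
    · rw [cM p h1 h2 h3] at hp
      have := (ha p h1 h2).1
      omega
    · rw [cY p h1 h2] at hp
      have := (hb p h1 h2).1
      omega
    · rw [cT p h1 h2] at hp
      have := (he p h1 h2).1
      omega
    · rwa [cO p h1 h2 h3 h4 h5 h6] at hp

end Helpers

/-- If `G` has girth at least 7, then every integer `k` with `2χ(G) ≤ k ≤ b(G)` is in the
b-spectrum of `G`. -/
theorem bColoring_of_seven_le_girth [Fintype V] (G : SimpleGraph V)
    (hg : (7 : ℕ∞) ≤ G.egirth) (k : ℕ)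
    (h1 : 2 * G.chromaticNumber ≤ (k : ℕ∞)) (h2 : k ≤ bChrom G) :
    ∃ c : V → ℕ, IsBColoring G k c := by
  classical
  have hG := nc_of_girth G hg
  have hne : G.chromaticNumber ≠ ⊤ := by
    intro h
    rw [h] at h1
    simp at h1
  obtain ⟨n, hn⟩ := ENat.ne_top_iff_exists.1 hne
  have hcol : G.Colorable n := SimpleGraph.chromaticNumber_le_iff_colorable.1 hn.symm.le
  have hnk : 2 * n ≤ k := by
    rw [← hn] at h1
    exact_mod_cast h1
  obtain ⟨f⟩ := hcol
  rcases Nat.eq_zero_or_pos k with hk | hk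
  · subst hk
    have hn0 : n = 0 := by omega
    subst hn0
    exact ⟨fun _ => 0, ⟨fun v => (f v).elim0, fun v => (f v).elim0, by simp⟩, by simp⟩
  have hbdd : BddAbove {k | ∃ c : V → ℕ, IsBColoring G k c} := by
    refine ⟨Fintype.card V, ?_⟩
    rintro K ⟨c, ⟨-, -, hc⟩, -⟩
    have : Finset.range K ⊆ Finset.univ.image c := by
      intro i hi
      obtain ⟨v, hv⟩ := hc i (Finset.mem_range.1 hi)
      exact Finset.mem_image.2 ⟨v, Finset.mem_univ _, hv⟩
    have h3 := (Finset.card_le_card this).trans Finset.card_image_le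
    simpa using h3
  have hnon : {k | ∃ c : V → ℕ, IsBColoring G k c}.Nonempty := by
    by_contra h
    rw [Set.not_nonempty_iff_eq_empty] at h
    unfold bChrom at h2
    rw [h] at h2
    simp at h2
    omega
  obtain ⟨c, ⟨hc1, hc2, hc3⟩, hc4⟩ := Nat.sSup_mem hnon hbdd
  change ∀ v, c v < bChrom G at hc1
  change ∀ i < bChrom G, _ at hc3
  change ∀ i < bChrom G, ∃ u, c u = i ∧ IsBVertex G (bChrom G) c u at hc4
  rcases h2.eq_or_lt with h | hlt
  · rw [h]
    exact ⟨c, ⟨hc1, hc2, hc3⟩, hc4⟩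
  have hinit : PState G k c := by
    refine ⟨fun u v huv _ => hc2 u v huv, ?_⟩
    intro i hi
    obtain ⟨u, hu, hub⟩ := hc4 i (by omega)
    refine ⟨u, hu, ?_, fun j hj hju => hub j (by omega) hju⟩
    have : (Finset.range (bChrom G)).erase (c u) ⊆ (nbF G u).image c := by
      intro j hj
      simp only [Finset.mem_erase, Finset.mem_range] at hj
      obtain ⟨w, hw, hwj⟩ := hub j hj.2 hj.1
      exact Finset.mem_image.2 ⟨w, (mem_nbF G u w).2 hw, hwj⟩
    have h3 := (Finset.card_le_card this).trans Finset.card_image_le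
    rw [Finset.card_erase_of_mem (Finset.mem_range.2 (by omega)), Finset.card_range] at h3
    omega
  -- induction on the number of uncolored vertices
  have main : ∀ N : ℕ, ∀ c : V → ℕ, PState G k c →
      (Finset.univ.filter (fun p => k ≤ c p)).card = N → ∃ c : V → ℕ, IsBColoring G k c := by
    intro N
    induction N using Nat.strong_induction_on with
    | _ N ih =>
      intro c hc hN
      by_cases hall : ∀ p, c p < k
      · refine ⟨c, ⟨hall, fun u v huv => hc.1 u v huv (hall u), ?_⟩, ?_⟩
        · intro i hi
          obtain ⟨u, hu, -⟩ := hc.2 i hi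
          exact ⟨u, hu⟩
        · intro i hi
          obtain ⟨u, hu, hb⟩ := hc.2 i hi
          exact ⟨u, hu, hb.2⟩
      · push Not at hall
        obtain ⟨v, hv⟩ := hall
        by_cases hmin : ∀ c', PState G k c' → (∀ p, k ≤ c' p → k ≤ c p) → k ≤ c' v
        · have hy := step G hG k c hc v hv hmin
          have : Nonempty V := ⟨v⟩
          choose! y hy1 hy2 hy3 using hy
          exact case_A G hG k n hk f hnk c hc.1 v hv y
            (fun l hl => ⟨hy1 l hl, hy2 l hl, (hy3 l hl).2⟩)
        · push Not at hmin
          obtain ⟨c', hc', hsub, hlt'⟩ := hmin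
          refine ih _ ?_ c' hc' rfl
          rw [← hN]
          apply Finset.card_lt_card
          rw [Finset.ssubset_iff_of_subset]
          · exact ⟨v, by simp [hv], by simp [hlt']⟩
          · intro p hp
            simp only [Finset.mem_filter, Finset.mem_univ, true_and] at hp ⊢
            exact hsub p hp
  exact main _ c hinit rfl
end

section
/- Let G be a graph with girth at least 7. If G admits a b-coloring with k colors where k ≥ χ(G)+1, then either G admits a b-coloring with k-1 colors, or G contains a (k-1)-iris. -/
open SimpleGraph

variable {V : Type*}

/-- `u` is a `k`-iris: `u` has at least `k-1` neighbors, each of degree at least `k-1`. -/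
def IsIris [Fintype V] (G : SimpleGraph V) [DecidableRel G.Adj] (k : ℕ) (u : V) : Prop :=
  ∃ S : Finset V, (∀ v ∈ S, G.Adj u v) ∧ k - 1 ≤ S.card ∧ ∀ v ∈ S, k - 1 ≤ G.degree v


theorem no_cycle_of_girth (G : SimpleGraph V) (hg : (7 : ℕ∞) ≤ G.egirth) {a : V}
    (w : G.Walk a a) (hw : w.IsCycle) : 7 ≤ w.length := by
  have := hg.trans (egirth_le_length hw)
  exact_mod_cast this

theorem noC3 (G : SimpleGraph V) (hg : (7 : ℕ∞) ≤ G.egirth) {a b c : V}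
    (h1 : G.Adj a b) (h2 : G.Adj b c) (h3 : G.Adj c a) : False := by
  have := no_cycle_of_girth G hg (.cons h1 (.cons h2 (.cons h3 .nil))) (by
    have := h1.ne; have := h2.ne; have := h3.ne
    simp [Walk.cons_isCycle_iff, Walk.cons_isPath_iff]
    grind)
  simp at this

theorem noC4 (G : SimpleGraph V) (hg : (7 : ℕ∞) ≤ G.egirth) {a b c d : V}
    (h1 : G.Adj a b) (h2 : G.Adj b c) (h3 : G.Adj c d) (h4 : G.Adj d a)
    (n1 : a ≠ c) (n2 : b ≠ d) : False := by
  have := no_cycle_of_girth G hg (.cons h1 (.cons h2 (.cons h3 (.cons h4 .nil)))) (by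
    have := h1.ne; have := h2.ne; have := h3.ne; have := h4.ne
    simp [Walk.cons_isCycle_iff, Walk.cons_isPath_iff]
    grind)
  simp at this

theorem noC5 (G : SimpleGraph V) (hg : (7 : ℕ∞) ≤ G.egirth) {a b c d e : V}
    (h1 : G.Adj a b) (h2 : G.Adj b c) (h3 : G.Adj c d) (h4 : G.Adj d e) (h5 : G.Adj e a) :
    False := by
  have n1 : a ≠ c := by rintro rfl; exact noC3 G hg h3 h4 h5
  have n2 : b ≠ d := by rintro rfl; exact noC3 G hg h4 h5 h1
  have n3 : c ≠ e := by rintro rfl; exact noC3 G hg h5 h1 h2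
  have n4 : d ≠ a := by rintro rfl; exact noC3 G hg h1 h2 h3
  have n5 : e ≠ b := by rintro rfl; exact noC3 G hg h2 h3 h4
  have := no_cycle_of_girth G hg (.cons h1 (.cons h2 (.cons h3 (.cons h4 (.cons h5 .nil))))) (by
    have := h1.ne; have := h2.ne; have := h3.ne; have := h4.ne; have := h5.ne
    simp [Walk.cons_isCycle_iff, Walk.cons_isPath_iff]
    grind)
  simp at this

theorem noC6 (G : SimpleGraph V) (hg : (7 : ℕ∞) ≤ G.egirth) {a b c d e f : V}
    (h1 : G.Adj a b) (h2 : G.Adj b c) (h3 : G.Adj c d) (h4 : G.Adj d e) (h5 : G.Adj e f)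
    (h6 : G.Adj f a) (n1 : a ≠ c) (n2 : b ≠ d) (n3 : c ≠ e) (n4 : d ≠ f) (n5 : e ≠ a)
    (n6 : f ≠ b) : False := by
  have m1 : a ≠ d := by rintro rfl; exact noC3 G hg h1 h2 h3
  have m2 : b ≠ e := by rintro rfl; exact noC3 G hg h2 h3 h4
  have m3 : c ≠ f := by rintro rfl; exact noC3 G hg h3 h4 h5
  have := no_cycle_of_girth G hg
    (.cons h1 (.cons h2 (.cons h3 (.cons h4 (.cons h5 (.cons h6 .nil)))))) (by
    have := h1.ne; have := h2.ne; have := h3.ne; have := h4.ne; have := h5.ne; have := h6.ne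
    simp [Walk.cons_isCycle_iff, Walk.cons_isPath_iff]
    grind)
  simp at this

open Classical in
theorem free_color [Fintype V] (φ : V → ℕ) (k d : ℕ) (hd : d < k) (S : Finset V)
    (hS : S.card < k - 1) : ∃ e, e < k ∧ e ≠ d ∧ ∀ v ∈ S, φ v ≠ e := by
  by_contra! h
  have : ((Finset.range k).erase d) ⊆ S.image φ := by
    intro e he
    simp at he
    obtain ⟨v, hv, hv'⟩ := h e he.2 he.1
    exact Finset.mem_image.2 ⟨v, hv, hv'⟩
  have h1 := Finset.card_le_card this
  have h2 := Finset.card_image_le (s := S) (f := φ)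
  rw [Finset.card_erase_of_mem (by simpa using hd), Finset.card_range] at h1
  omega

open Classical in
theorem extend_coloring [Fintype V] (G : SimpleGraph V) (k d : ℕ) (hd : d < k) (n : ℕ) :
    ∀ (P Q : Finset V) (φ : V → ℕ), (Q \ P).card = n → P ⊆ Q →
    (∀ v ∈ P, φ v < k ∧ φ v ≠ d) → (∀ u ∈ P, ∀ v ∈ P, G.Adj u v → φ u ≠ φ v) →
    (∀ x ∈ Q, x ∉ P → (Finset.univ.filter (fun v => G.Adj x v ∧ v ∈ Q)).card < k - 1) →
    ∃ φ' : V → ℕ, (∀ v ∈ P, φ' v = φ v) ∧ (∀ v ∈ Q, φ' v < k ∧ φ' v ≠ d) ∧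
      (∀ u ∈ Q, ∀ v ∈ Q, G.Adj u v → φ' u ≠ φ' v) := by
  induction n with
  | zero =>
    intro P Q φ hn hPQ h1 h2 _
    have : P = Q := hPQ.antisymm (Finset.sdiff_eq_empty_iff_subset.1 (Finset.card_eq_zero.1 hn))
    subst this
    exact ⟨φ, fun _ _ => rfl, h1, h2⟩
  | succ n ih =>
    intro P Q φ hn hPQ h1 h2 h3
    obtain ⟨x, hx⟩ : (Q \ P).Nonempty := Finset.card_pos.1 (by omega)
    have hx' := Finset.mem_sdiff.1 hx
    obtain ⟨e, he1, he2, he3⟩ := free_color φ k d hd _ (h3 x hx'.1 hx'.2)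
    obtain ⟨φ', a1, a2, a3⟩ := ih (insert x P) Q (Function.update φ x e)
      (by
        rw [Finset.sdiff_insert, Finset.card_erase_of_mem hx, hn]; rfl)
      (by grind)
      (by
        intro v hv
        by_cases hvx : v = x
        · subst hvx; simp [he1, he2]
        · simp only [Function.update_of_ne hvx]; exact h1 v (by grind))
      (by
        intro u hu v hv huv
        have := huv.ne
        have hs := huv.symm
        simp only [Finset.mem_filter, Finset.mem_univ, true_and] at he3
        by_cases hux : u = x
        · subst hux
          have hvu : v ≠ u := huv.ne'
          rw [Function.update_self, Function.update_of_ne hvu]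
          exact (he3 v ⟨huv, hPQ (by grind)⟩).symm
        · by_cases hvx : v = x
          · subst hvx
            rw [Function.update_self, Function.update_of_ne hux]
            exact (he3 u ⟨hs, hPQ (by grind)⟩)
          · rw [Function.update_of_ne hvx, Function.update_of_ne hux]
            exact h2 u (by grind) v (by grind) huv)
      (by
        intro y hy hyP
        exact h3 y hy (by grind))
    refine ⟨φ', ?_, a2, a3⟩
    intro v hv
    rw [a1 v (by grind), Function.update_of_ne]
    rintro rfl
    exact hx'.2 hv

theorem short_path_unique (G : SimpleGraph V) (hg : (7 : ℕ∞) ≤ G.egirth) {x b y y' : V}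
    (hxb : x ≠ b) (hy : G.Adj x y) (hy' : G.Adj x y')
    (r : y = b ∨ G.Adj y b ∨ (y ≠ b ∧ ∃ p, G.Adj y p ∧ G.Adj p b ∧ p ≠ x))
    (r' : y' = b ∨ G.Adj y' b ∨ (y' ≠ b ∧ ∃ p, G.Adj y' p ∧ G.Adj p b ∧ p ≠ x)) : y = y' := by
  by_contra hne
  rcases r with rfl | r | ⟨n1, p, r1, r2, r3⟩ <;> rcases r' with rfl | r' | ⟨n1', p', r1', r2', r3'⟩
  · exact hne rfl
  · exact noC3 G hg hy' r' hy.symm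
  · exact noC4 G hg hy' r1' r2' hy.symm r3'.symm n1'
  · exact noC3 G hg hy r hy'.symm
  · exact noC4 G hg hy r r'.symm hy'.symm hxb hne
  · exact noC5 G hg hy r r2'.symm r1'.symm hy'.symm
  · exact noC4 G hg hy r1 r2 hy'.symm r3.symm n1
  · exact noC5 G hg hy' r' r2.symm r1.symm hy.symm
  · have hpp : p ≠ p' := by
      rintro rfl
      exact noC4 G hg hy r1 r1'.symm hy'.symm r3.symm hne
    exact noC6 G hg hy r1 r2 r2'.symm r1'.symm hy'.symm r3.symm n1 hpp n1'.symm r3' (Ne.symm hne)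

open Classical in
theorem tight_count (N : Finset V) (I : V → Finset ℕ) (R : Finset ℕ)
    (hI : ∀ y ∈ N, I y ⊆ R) (hne : ∀ y ∈ N, 1 ≤ (I y).card)
    (hdis : ∀ y ∈ N, ∀ y' ∈ N, y ≠ y' → Disjoint (I y) (I y'))
    (hc : R.card ≤ N.card) : (∀ y ∈ N, (I y).card = 1) ∧ ∀ i ∈ R, ∃ y ∈ N, i ∈ I y := by
  have h1 : (N.biUnion I).card = ∑ y ∈ N, (I y).card := Finset.card_biUnion hdis
  have hsub : N.biUnion I ⊆ R := Finset.biUnion_subset.2 hI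
  have h2 := Finset.card_le_card hsub
  have h3 : ∑ y ∈ N, 1 ≤ ∑ y ∈ N, (I y).card := Finset.sum_le_sum hne
  have h4 : ∑ y ∈ N, 1 = N.card := by simp
  constructor
  · have := (Finset.sum_eq_sum_iff_of_le hne).1 (by omega)
    intro y hy; exact (this y hy).symm
  · have : N.biUnion I = R := Finset.eq_of_subset_of_card_le hsub (by omega)
    intro i hi
    rw [← this] at hi
    simpa using hi

open Classical in
theorem delete_color_or_stuck [Fintype V] (G : SimpleGraph V) (hg : (7 : ℕ∞) ≤ G.egirth)
    (k : ℕ) (hk : 4 ≤ k) (c : V → ℕ) (D : V → Prop)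
    (hDlow : ∀ v, ¬ D v → (Finset.univ.filter (fun w => G.Adj v w)).card < k - 2)
    (hDnb : ∀ v, (Finset.univ.filter (fun w => G.Adj v w ∧ D w)).card < k - 2)
    (hc : ∀ v, c v < k) (hp : ∀ u v, G.Adj u v → c u ≠ c v)
    (b : ℕ → V) (hb : ∀ i < k, c (b i) = i ∧ IsBVertex G k c (b i))
    (hbD : ∀ i < k, D (b i)) (d : ℕ) (hd : d < k) :
    (∃ φ : V → ℕ, (∀ v, φ v < k ∧ φ v ≠ d) ∧ (∀ u v, G.Adj u v → φ u ≠ φ v) ∧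
      ∀ i < k, i ≠ d → φ (b i) = i ∧ ∀ j < k, j ≠ d → j ≠ i → ∃ w, G.Adj (b i) w ∧ φ w = j) ∨
    (∃ x, c x = d ∧ IsBVertex G k c x ∧ ∃ p : ℕ → V,
      (∀ i < k, i ≠ d → G.Adj x (p i) ∧ (p i = b i ∨ G.Adj (p i) (b i))) ∧
      ∀ i < k, i ≠ d → ∀ j < k, j ≠ d → i ≠ j → p i ≠ p j) := by
  let F : Finset V := Finset.univ.filter
    (fun v => c v ≠ d ∧ ∃ i, i < k ∧ i ≠ d ∧ (v = b i ∨ G.Adj v (b i)))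
  let T : Finset V := Finset.univ.filter
    (fun v => D v ∧ v ∉ F ∧ 2 ≤ (Finset.univ.filter (fun w => G.Adj v w ∧ w ∈ F ∧ ¬ D w)).card)
  have hF : ∀ v, v ∈ F ↔ (c v ≠ d ∧ ∃ i, i < k ∧ i ≠ d ∧ (v = b i ∨ G.Adj v (b i))) := by
    intro v; simp [F]
  have hT : ∀ v, v ∈ T ↔ (D v ∧ v ∉ F ∧
      2 ≤ (Finset.univ.filter (fun w => G.Adj v w ∧ w ∈ F ∧ ¬ D w)).card) := by
    intro v; simp [T]
  clear_value F T
  by_cases hstuck : ∃ x ∈ T, c x = d ∧ IsBVertex G k c x ∧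
      k - 1 ≤ (Finset.univ.filter (fun w => G.Adj x w ∧ w ∈ F ∪ T)).card
  · right
    obtain ⟨x, hxT, hxd, hxb, hcard⟩ := hstuck
    have hxb' : ∀ i < k, i ≠ d → x ≠ b i := by
      rintro i hi hid rfl
      exact hid ((hb i hi).1.symm.trans hxd)
    let Rel : V → ℕ → Prop := fun y i =>
      y = b i ∨ G.Adj y (b i) ∨ (y ≠ b i ∧ ∃ p, G.Adj y p ∧ G.Adj p (b i) ∧ p ≠ x)
    let I : V → Finset ℕ := fun y => ((Finset.range k).erase d).filter (Rel y)
    have hI : ∀ y i, i ∈ I y ↔ (i < k ∧ i ≠ d ∧ Rel y i) := by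
      intro y i; simp [I]; tauto
    have hR : ((Finset.range k).erase d).card = k - 1 := by
      rw [Finset.card_erase_of_mem (by simpa using hd), Finset.card_range]
    have hdis : ∀ y y' i, G.Adj x y → G.Adj x y' → i ∈ I y → i ∈ I y' → y = y' := by
      intro y y' i h1 h2 h3 h4
      rw [hI] at h3 h4
      exact short_path_unique G hg (hxb' i h3.1 h3.2.1) h1 h2 h3.2.2 h4.2.2
    have hIF : ∀ y ∈ F, ∃ i ∈ I y, y = b i ∨ G.Adj y (b i) := by
      intro y hy
      obtain ⟨-, i, h1, h2, h3⟩ := (hF y).1 hy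
      refine ⟨i, (hI y i).2 ⟨h1, h2, ?_⟩, h3⟩
      rcases h3 with h3 | h3
      · exact Or.inl h3
      · exact Or.inr (Or.inl h3)
    have hIT : ∀ y ∈ T, 2 ≤ (I y).card := by
      intro y hy
      obtain ⟨h1, h2, h3⟩ := (hT y).1 hy
      obtain ⟨p, hp1, q, hq1, hpq⟩ := Finset.one_lt_card.1 h3
      simp only [Finset.mem_filter, Finset.mem_univ, true_and] at hp1 hq1
      have key : ∀ p, G.Adj y p → p ∈ F → ¬ D p → ∃ i ∈ I y, G.Adj p (b i) ∧ y ≠ b i := by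
        intro p hp1 hp2 hp3
        obtain ⟨-, i, g1, g2, g3⟩ := (hF p).1 hp2
        have g4 : G.Adj p (b i) := by
          rcases g3 with rfl | g3
          · exact absurd (hbD i g1) hp3
          · exact g3
        by_cases hyc : c y = d
        · have hyb : y ≠ b i := by
            rintro rfl; exact g2 ((hb i g1).1.symm.trans hyc)
          refine ⟨i, (hI y i).2 ⟨g1, g2, Or.inr (Or.inr ⟨hyb, p, hp1, g4, ?_⟩)⟩, g4, hyb⟩
          rintro rfl; exact hp3 ((hT _).1 hxT).1
        have hyb : y ≠ b i := by
          rintro rfl; exact h2 ((hF _).2 ⟨hyc, i, g1, g2, Or.inl rfl⟩)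
        refine ⟨i, (hI y i).2 ⟨g1, g2, Or.inr (Or.inr ⟨hyb, p, hp1, g4, ?_⟩)⟩, g4, hyb⟩
        rintro rfl; exact hp3 ((hT _).1 hxT).1
      obtain ⟨i, i1, i2, i3⟩ := key p hp1.1 hp1.2.1 hp1.2.2
      obtain ⟨j, j1, j2, j3⟩ := key q hq1.1 hq1.2.1 hq1.2.2
      refine Finset.one_lt_card.2 ⟨i, i1, j, j1, ?_⟩
      rintro rfl
      exact noC4 G hg hp1.1 i2 j2.symm hq1.1.symm i3 hpq
    obtain ⟨t1, t2⟩ := tight_count (Finset.univ.filter (fun w => G.Adj x w ∧ w ∈ F ∪ T)) I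
      ((Finset.range k).erase d) (fun y _ => Finset.filter_subset _ _)
      (by
        intro y hy
        simp only [Finset.mem_filter, Finset.mem_univ, true_and, Finset.mem_union] at hy
        rcases hy.2 with h | h
        · obtain ⟨i, hi, -⟩ := hIF y h
          exact Finset.card_pos.2 ⟨i, hi⟩
        · have := hIT y h; omega)
      (by
        intro y hy y' hy' hne
        simp only [Finset.mem_filter, Finset.mem_univ, true_and] at hy hy'
        rw [Finset.disjoint_left]
        intro i h1 h2
        exact hne (hdis y y' i hy.1 hy'.1 h1 h2))
      (by rw [hR]; exact hcard)
    have ex : ∀ i, ∃ y, i < k → i ≠ d → G.Adj x y ∧ (y = b i ∨ G.Adj y (b i)) ∧ I y = {i} := by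
      intro i
      by_cases hi : i < k ∧ i ≠ d
      · obtain ⟨y, hy, hiy⟩ := t2 i (by simp [hi.1, hi.2])
        have hy1 := t1 y hy
        simp only [Finset.mem_filter, Finset.mem_univ, true_and, Finset.mem_union] at hy
        obtain ⟨a, ha⟩ := Finset.card_eq_one.1 hy1
        refine ⟨y, fun _ _ => ?_⟩
        rcases hy.2 with h | h
        · obtain ⟨i', hi', hh⟩ := hIF y h
          rw [ha] at hi' hiy
          simp at hi' hiy
          subst hi' hiy
          exact ⟨hy.1, hh, ha⟩
        · have := hIT y h; omega
      · exact ⟨x, fun h1 h2 => absurd ⟨h1, h2⟩ hi⟩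
    choose p hp using ex
    refine ⟨x, hxd, hxb, p, fun i h1 h2 => ⟨(hp i h1 h2).1, (hp i h1 h2).2.1⟩, ?_⟩
    intro i h1 h2 j h3 h4 hij he
    have e1 := (hp i h1 h2).2.2
    have e2 := (hp j h3 h4).2.2
    rw [he, e2] at e1
    exact hij (Finset.singleton_injective e1).symm
  · left
    have ex : ∀ x, ∃ e, (x ∈ T → c x = d → e < k ∧ e ≠ d ∧
        ∀ w, G.Adj x w → w ∈ F ∪ T → c w ≠ e) := by
      intro x
      by_cases hx : x ∈ T ∧ c x = d
      · by_cases hcard : k - 1 ≤ (Finset.univ.filter (fun w => G.Adj x w ∧ w ∈ F ∪ T)).card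
        · have hnb : ¬ IsBVertex G k c x := fun h => hstuck ⟨x, hx.1, hx.2, h, hcard⟩
          unfold IsBVertex at hnb
          push Not at hnb
          obtain ⟨j, hj1, hj2, hj3⟩ := hnb
          exact ⟨j, fun _ _ => ⟨hj1, by rwa [hx.2] at hj2, fun w hw _ => hj3 w hw⟩⟩
        · obtain ⟨e, h1, h2, h3⟩ := free_color c k d hd _ (not_le.1 hcard)
          refine ⟨e, fun _ _ => ⟨h1, h2, fun w hw hw' => h3 w (by
            simp only [Finset.mem_filter, Finset.mem_univ, true_and]; exact ⟨hw, hw'⟩)⟩⟩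
      · exact ⟨0, fun h1 h2 => absurd ⟨h1, h2⟩ hx⟩
    choose e he using ex
    let φ0 : V → ℕ := fun v => if c v = d then e v else c v
    have hFd : ∀ v ∈ F, c v ≠ d := fun v hv => ((hF v).1 hv).1
    have hTd : ∀ v ∈ F ∪ T, c v = d → v ∈ T := by
      intro v hv hvd
      rcases Finset.mem_union.1 hv with h | h
      · exact absurd hvd (hFd v h)
      · exact h
    have p1 : ∀ v ∈ F ∪ T, φ0 v < k ∧ φ0 v ≠ d := by
      intro v hv
      by_cases hvd : c v = d
      · simp only [φ0, hvd, if_true]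
        have := he v (hTd v hv hvd) hvd
        exact ⟨this.1, this.2.1⟩
      · simp only [φ0, hvd, if_false]
        exact ⟨hc v, hvd⟩
    have p2 : ∀ u ∈ F ∪ T, ∀ v ∈ F ∪ T, G.Adj u v → φ0 u ≠ φ0 v := by
      intro u hu v hv huv
      by_cases hud : c u = d
      · have hvd : c v ≠ d := fun h => hp u v huv (hud.trans h.symm)
        simp only [φ0, hud, hvd, if_true, if_false]
        exact ((he u (hTd u hu hud) hud).2.2 v huv hv).symm
      · by_cases hvd : c v = d
        · simp only [φ0, hud, hvd, if_true, if_false]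
          exact ((he v (hTd v hv hvd) hvd).2.2 u huv.symm hu)
        · simp only [φ0, hud, hvd, if_false]
          exact hp u v huv
    obtain ⟨φ1, q0, q1, q2⟩ := extend_coloring G k d hd _ (F ∪ T) (F ∪ Finset.univ.filter D) φ0 rfl
      (by
        intro v hv
        rcases Finset.mem_union.1 hv with h | h
        · exact Finset.mem_union_left _ h
        · exact Finset.mem_union_right _ (by simpa using ((hT v).1 h).1)) p1 p2
      (by
        intro x hx hx'
        simp only [Finset.mem_union, not_or, Finset.mem_filter, Finset.mem_univ, true_and] at hx hx'
        have hxD : D x := hx.resolve_left hx'.1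
        have hlt : (Finset.univ.filter (fun w => G.Adj x w ∧ w ∈ F ∧ ¬ D w)).card < 2 := by
          by_contra hcon
          exact hx'.2 ((hT x).2 ⟨hxD, hx'.1, not_lt.1 hcon⟩)
        have hsub : (Finset.univ.filter (fun v => G.Adj x v ∧ v ∈ F ∪ Finset.univ.filter D)) ⊆
            (Finset.univ.filter (fun w => G.Adj x w ∧ D w)) ∪
            (Finset.univ.filter (fun w => G.Adj x w ∧ w ∈ F ∧ ¬ D w)) := by
          intro v hv
          simp only [Finset.mem_union, Finset.mem_filter, Finset.mem_univ, true_and] at hv ⊢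
          tauto
        have h1 := (Finset.card_le_card hsub).trans (Finset.card_union_le _ _)
        have h2 := hDnb x
        omega)
    obtain ⟨φ2, r0, r1, r2⟩ := extend_coloring G k d hd _ (F ∪ Finset.univ.filter D) Finset.univ φ1
      rfl (Finset.subset_univ _) q1 q2
      (by
        intro x _ hx
        simp only [Finset.mem_union, not_or, Finset.mem_filter, Finset.mem_univ, true_and] at hx
        have := hDlow x hx.2
        simp only [Finset.mem_univ, and_true]
        omega)
    have hφF : ∀ v ∈ F, φ2 v = c v := by
      intro v hv
      rw [r0 v (Finset.mem_union_left _ hv), q0 v (Finset.mem_union_left _ hv)]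
      simp [φ0, hFd v hv]
    refine ⟨φ2, fun v => r1 v (Finset.mem_univ _),
      fun u v => r2 u (Finset.mem_univ _) v (Finset.mem_univ _), ?_⟩
    intro i hi hid
    have hbi := hb i hi
    constructor
    · rw [hφF _ ((hF _).2 ⟨by rw [hbi.1]; exact hid, i, hi, hid, Or.inl rfl⟩), hbi.1]
    · intro j hj hjd hji
      obtain ⟨w, hw1, hw2⟩ := hbi.2 j hj (by rw [hbi.1]; exact hji)
      refine ⟨w, hw1, ?_⟩
      rw [hφF _ ((hF _).2 ⟨by rw [hw2]; exact hjd, i, hi, hid, Or.inr hw1.symm⟩), hw2]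

theorem relabel [Fintype V] (G : SimpleGraph V) (k : ℕ) (b : ℕ → V) (d : ℕ) (hd : d < k)
    (h : ∃ φ : V → ℕ, (∀ v, φ v < k ∧ φ v ≠ d) ∧ (∀ u v, G.Adj u v → φ u ≠ φ v) ∧
      ∀ i < k, i ≠ d → φ (b i) = i ∧ ∀ j < k, j ≠ d → j ≠ i → ∃ w, G.Adj (b i) w ∧ φ w = j) :
    ∃ c' : V → ℕ, IsBColoring G (k - 1) c' := by
  obtain ⟨φ, h1, h2, h3⟩ := h
  let σ : ℕ → ℕ := fun n => if n = k - 1 then d else n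
  have hσ : ∀ i < k - 1, ∃ j < k, j ≠ d ∧ σ j = i := by
    intro i hi
    by_cases hid : i = d
    · exact ⟨k - 1, by omega, by omega, by simp [σ, hid]⟩
    · exact ⟨i, by omega, hid, by simp [σ]; omega⟩
  refine ⟨fun v => σ (φ v), ⟨⟨?_, ?_, ?_⟩, ?_⟩⟩
  · intro v
    have := h1 v
    simp only [σ]; split_ifs <;> omega
  · intro u v huv
    have a1 := h1 u
    have a2 := h1 v
    have a3 := h2 u v huv
    simp only [σ]; split_ifs <;> omega
  · intro i hi
    obtain ⟨j, hj, hjd, rfl⟩ := hσ i hi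
    exact ⟨b j, by simp only [(h3 j hj hjd).1]⟩
  · intro i hi
    obtain ⟨j, hj, hjd, rfl⟩ := hσ i hi
    refine ⟨b j, by simp only [(h3 j hj hjd).1], ?_⟩
    intro l hl hlj
    obtain ⟨l', hl', hld, rfl⟩ := hσ l hl
    simp only [(h3 j hj hjd).1] at hlj
    obtain ⟨w, hw, hw'⟩ := (h3 j hj hjd).2 l' hl' hld (by rintro rfl; exact hlj rfl)
    exact ⟨w, hw, by simp only [hw']⟩

/-- If `G` has girth at least 7 and a b-coloring with `k ≥ χ(G) + 1` colors, then either `G`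
has a b-coloring with `k - 1` colors, or `G` contains a `(k-1)`-iris. -/
theorem bColoring_pred_or_iris [Fintype V] (G : SimpleGraph V) [DecidableRel G.Adj]
    (hg : (7 : ℕ∞) ≤ G.egirth) (k : ℕ) (c : V → ℕ) (hb : IsBColoring G k c)
    (hk : G.chromaticNumber + 1 ≤ (k : ℕ∞)) :
    (∃ c' : V → ℕ, IsBColoring G (k - 1) c') ∨ ∃ u, IsIris G (k - 1) u := by
  classical
  by_contra hcon
  push Not at hcon
  obtain ⟨hnb, hni⟩ := hcon
  obtain ⟨⟨hc1, hc2, hc3⟩, hc4⟩ := hb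
  have hk0 : k ≠ 0 := by
    rintro rfl
    simp at hk
  obtain ⟨v0, hv0, hv0b⟩ := hc4 0 (by omega)
  have hk4 : 4 ≤ k := by
    by_contra hlt
    by_cases h3 : k = 3
    · subst h3
      obtain ⟨w, hw, -⟩ := hv0b 1 (by omega) (by omega)
      apply hni v0
      refine ⟨{w}, by simpa using hw, by simp, ?_⟩
      intro v hv
      rw [Finset.mem_singleton] at hv
      subst hv
      exact (G.degree_pos_iff_exists_adj v).2 ⟨v0, hw.symm⟩
    · exact hni v0 ⟨∅, by simp, by simp; omega, by simp⟩
  have hdeg : ∀ v, G.degree v = (Finset.univ.filter (fun w => G.Adj v w)).card := by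
    intro v
    rw [← G.card_neighborFinset_eq_degree, G.neighborFinset_eq_filter]
  let D : V → Prop := fun v => k - 2 ≤ G.degree v
  have hDlow : ∀ v, ¬ D v → (Finset.univ.filter (fun w => G.Adj v w)).card < k - 2 := by
    intro v hv
    have : ¬ (k - 2 ≤ G.degree v) := hv
    rw [hdeg] at this
    omega
  have hDnb : ∀ v, (Finset.univ.filter (fun w => G.Adj v w ∧ D w)).card < k - 2 := by
    intro v
    by_contra hlt
    apply hni v
    refine ⟨Finset.univ.filter (fun w => G.Adj v w ∧ D w), ?_, by omega, ?_⟩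
    · intro w hw; exact (Finset.mem_filter.1 hw).2.1
    · intro w hw
      have : k - 2 ≤ G.degree w := (Finset.mem_filter.1 hw).2.2
      omega
  have hBD : ∀ x, IsBVertex G k c x → D x := by
    intro x hx
    change k - 2 ≤ G.degree x
    rw [hdeg]
    by_contra hlt
    obtain ⟨e, he1, he2, he3⟩ := free_color c k (c x) (hc1 x)
      (Finset.univ.filter (fun w => G.Adj x w)) (by omega)
    obtain ⟨w, hw, hw'⟩ := hx e he1 he2
    exact he3 w (by simpa using hw) hw'
  have exb : ∀ i, ∃ u, i < k → c u = i ∧ IsBVertex G k c u := by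
    intro i
    by_cases hi : i < k
    · obtain ⟨u, hu⟩ := hc4 i hi
      exact ⟨u, fun _ => hu⟩
    · exact ⟨v0, fun h => absurd h hi⟩
  choose b hbv using exb
  rcases delete_color_or_stuck G hg k hk4 c D (fun v hv => by convert hDlow v hv)
    (fun v => by convert hDnb v) hc1 hc2 b hbv
    (fun i hi => hBD _ (hbv i hi).2) 0 (by omega) with h | ⟨x, hx1, hx2, p, hp1, hp2⟩
  · obtain ⟨c', hc'⟩ := relabel G k b 0 (by omega) h
    exact hnb c' hc'
  have hbv' : ∀ i < k, c (Function.update b 0 x i) = i ∧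
      IsBVertex G k c (Function.update b 0 x i) := by
    intro i hi
    by_cases h0 : i = 0
    · subst h0; simp [hx1, hx2]
    · rw [Function.update_of_ne h0]; exact hbv i hi
  rcases delete_color_or_stuck G hg k hk4 c D (fun v hv => by convert hDlow v hv)
    (fun v => by convert hDnb v) hc1 hc2 _ hbv'
    (fun i hi => hBD _ (hbv' i hi).2) 1 (by omega) with h | ⟨x', hx1', hx2', q, hq1, hq2⟩
  · obtain ⟨c', hc'⟩ := relabel G k _ 1 (by omega) h
    exact hnb c' hc'
  obtain ⟨i, hik, hi0, hi1, hpi⟩ : ∃ i, i < k ∧ i ≠ 0 ∧ i ≠ 1 ∧ p i ≠ x' := by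
    by_cases h2 : p 2 = x'
    · refine ⟨3, by omega, by omega, by omega, ?_⟩
      rw [← h2]
      exact hp2 3 (by omega) (by omega) 2 (by omega) (by omega) (by omega)
    · exact ⟨2, by omega, by omega, by omega, h2⟩
  obtain ⟨P1, P2⟩ := hp1 i hik hi0
  obtain ⟨Q1, Q2⟩ := hq1 i hik hi1
  obtain ⟨R1, R2⟩ := hq1 0 (by omega) (by omega)
  have hne := hq2 i hik hi1 0 (by omega) (by omega) hi0
  rw [Function.update_of_ne hi0] at Q2
  rw [Function.update_self] at R2
  have hci := (hbv i hik).1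
  have n1 : x ≠ b i := by rintro rfl; omega
  have n2 : x' ≠ b i := by rintro rfl; omega
  have n3 : x ≠ x' := by rintro rfl; omega
  rcases R2 with R2 | R2
  · rw [R2] at R1 hne
    apply hne
    refine short_path_unique G hg n2 Q1 R1 ?_ ?_
    · tauto
    · rcases P2 with P2 | P2
      · right; left; rw [← P2]; exact P1
      · right; right; exact ⟨n1, p i, P1, P2, hpi⟩
  · by_cases hqp : q 0 = p i
    · apply hne
      refine short_path_unique G hg n2 Q1 R1 (by tauto) ?_
      rw [hqp]; tauto
    · have n4 : q 0 ≠ b i := by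
        intro h
        apply hne
        exact short_path_unique G hg n2 Q1 R1 (by tauto) (Or.inl h)
      rcases P2 with P2 | P2
      · rw [P2] at P1
        apply hne
        exact short_path_unique G hg n2 Q1 R1 (by tauto) (Or.inr (Or.inr ⟨n4, x, R2, P1, n3⟩))
      · rcases Q2 with Q2 | Q2
        · rw [Q2] at Q1
          exact noC5 G hg R1 R2 P1 P2 Q1.symm
        · have n5 : p i ≠ q i := by
            intro h
            rw [← h] at Q1 hne
            exact noC4 G hg R1 R2 P1 Q1.symm n3.symm hqp
          exact noC6 G hg R1 R2 P1 P2 Q2.symm Q1.symm n3.symm hqp n1 n5 n2.symm hne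
end

section
/- If G is a forest (in particular any graph of infinite girth), then for every integer k with χ(G) ≤ k ≤ b(G), G admits a b-coloring with k colors. -/
open SimpleGraph

variable {V : Type*}

theorem exists_rank (G : SimpleGraph V) (hG : G.IsAcyclic) (x : V) :
    ∃ r : V → ℕ, r x = 0 ∧ (∀ u v, G.Adj u v → r u ≠ r v) ∧
      (∀ v u w, G.Adj v u → G.Adj v w → r u < r v → r w < r v → u = w) := by
  classical
  obtain ⟨root, hr, hadj, hx⟩ : ∃ root : V → V, (∀ v, G.Reachable (root v) v) ∧
      (∀ u v, G.Adj u v → root u = root v) ∧ root x = x := by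
    refine ⟨fun v => if G.Reachable x v then x else (G.connectedComponentMk v).out, ?_, ?_, ?_⟩
    · intro v
      dsimp only
      split_ifs with h
      · exact h
      · exact ConnectedComponent.exact (Quot.out_eq _)
    · intro u v h
      have h1 : G.Reachable x u ↔ G.Reachable x v :=
        ⟨fun a => a.trans h.reachable, fun a => a.trans h.symm.reachable⟩
      have h2 : G.connectedComponentMk u = G.connectedComponentMk v :=
        ConnectedComponent.sound h.reachable
      simp only [h1, h2]
    · simp
  refine ⟨fun v => G.dist (root v) v, by simp [hx], ?_, ?_⟩
  · intro u v h
    simp only [hadj u v h]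
    exact hG.dist_ne_of_adj h (hadj u v h ▸ hr u)
  · have key : ∀ v u, G.Adj v u → G.dist (root u) u < G.dist (root v) v →
        ∀ p : G.Walk (root v) v, p.IsPath → u = p.penultimate := by
      intro v u h hlt p hp
      rw [← hadj v u h] at hlt
      have hru : G.Reachable (root v) u := (hr v).trans h.reachable
      obtain ⟨q, hq⟩ := hru.exists_walk_length_eq_dist
      have h1 : G.dist (root v) v ≤ (q.concat h.symm).length := dist_le _
      have h2 : (q.concat h.symm).IsPath := by
        apply Walk.isPath_of_length_eq_dist
        simp at h1 ⊢
        omega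
      have h3 := hG.path_unique ⟨p, hp⟩ ⟨_, h2⟩
      have h4 : p = q.concat h.symm := congrArg Subtype.val h3
      rw [h4]; simp
    intro v u w h1 h2 h3 h4
    obtain ⟨p, hp, -⟩ := (hr v).exists_path_of_dist
    rw [key v u h1 h3 p hp, key v w h2 h4 p hp]

theorem exists_lowest (D : Finset V) (r : V → ℕ) (k : ℕ) (hk : k ≤ D.card) :
    ∃ B ⊆ D, B.card = k ∧ ∀ x ∈ D, ∀ u ∈ B, r x < r u → x ∈ B := by
  classical
  induction k with
  | zero => exact ⟨∅, by simp, by simp, by simp⟩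
  | succ k ih =>
    obtain ⟨B, hB, hc, h⟩ := ih (by omega)
    have hne : (D \ B).Nonempty := by
      rw [← Finset.card_pos, Finset.card_sdiff_of_subset hB]; omega
    obtain ⟨y, hy, hmin⟩ := Finset.exists_min_image (D \ B) r hne
    rw [Finset.mem_sdiff] at hy
    refine ⟨insert y B, ?_, ?_, ?_⟩
    · intro z hz
      rcases Finset.mem_insert.1 hz with rfl | hz
      · exact hy.1
      · exact hB hz
    · rw [Finset.card_insert_of_notMem hy.2, hc]
    · intro x hx u hu hlt
      by_contra hxB
      rw [Finset.mem_insert, not_or] at hxB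
      rcases Finset.mem_insert.1 hu with rfl | hu
      · have := hmin x (by simp [hx, hxB.2]); omega
      · exact hxB.2 (h x hx u hu hlt)

theorem extend_coloring_s13 [Fintype V] [DecidableEq V] (G : SimpleGraph V) (r : V → ℕ)
    (hr : ∀ u v, G.Adj u v → r u ≠ r v) (k : ℕ) (n : ℕ) :
    ∀ (S : Finset V) (c₀ : V → ℕ), Sᶜ.card = n → (∀ v ∈ S, c₀ v < k) →
      (∀ u ∈ S, ∀ v ∈ S, G.Adj u v → c₀ u ≠ c₀ v) →
      (∀ w, w ∉ S → ∃ T : Finset V, T.card < k ∧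
        ∀ v, G.Adj w v → (v ∈ S ∨ r v < r w) → v ∈ T) →
      ∃ c : V → ℕ, (∀ v ∈ S, c v = c₀ v) ∧ (∀ v, c v < k) ∧ ∀ u v, G.Adj u v → c u ≠ c v := by
  induction n with
  | zero =>
    intro S c₀ hn h1 h2 _
    have hS : ∀ v, v ∈ S := by
      intro v
      by_contra hv
      have : v ∈ Sᶜ := by simpa using hv
      rw [Finset.card_eq_zero] at hn
      simp [hn] at this
    exact ⟨c₀, fun _ _ => rfl, fun v => h1 v (hS v), fun u v => h2 u (hS u) v (hS v)⟩
  | succ n ih =>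
    intro S c₀ hn h1 h2 h3
    have hne : (Sᶜ).Nonempty := by rw [← Finset.card_pos]; omega
    obtain ⟨w, hw, hmin⟩ := Finset.exists_min_image Sᶜ r hne
    have hwS : w ∉ S := by simpa using hw
    obtain ⟨T, hT, hTw⟩ := h3 w hwS
    obtain ⟨i, hik, hi⟩ : ∃ i ∈ Finset.range k, i ∉ T.image c₀ := by
      apply Finset.exists_mem_notMem_of_card_lt_card
      rw [Finset.card_range]
      exact lt_of_le_of_lt Finset.card_image_le hT
    have hne' : ∀ v ∈ S, v ≠ w := fun v hv h => hwS (h ▸ hv)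
    have hi' : ∀ v ∈ S, G.Adj w v → c₀ v ≠ i := by
      intro v hv hwv h
      exact hi (Finset.mem_image.2 ⟨v, hTw v hwv (Or.inl hv), h⟩)
    obtain ⟨c, hc1, hc2, hc3⟩ := ih (insert w S) (Function.update c₀ w i) (by
        rw [Finset.card_compl] at hn ⊢
        rw [Finset.card_insert_of_notMem hwS]; omega) (by
        intro v hv
        rcases Finset.mem_insert.1 hv with rfl | hv
        · simpa using hik
        · rw [Function.update_of_ne (hne' v hv)]; exact h1 v hv) (by
        intro u hu₁ v hv₁ huv
        rcases Finset.mem_insert.1 hu₁ with hu | hu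
        · rcases Finset.mem_insert.1 hv₁ with hv | hv
          · exact absurd huv (by rw [hu, hv]; exact G.irrefl)
          · rw [Function.update_of_ne (hne' v hv), hu, Function.update_self]
            exact (hi' v hv (hu ▸ huv)).symm
        · rcases Finset.mem_insert.1 hv₁ with hv | hv
          · rw [Function.update_of_ne (hne' u hu), hv, Function.update_self]
            exact hi' u hu (hv ▸ huv.symm)
          · rw [Function.update_of_ne (hne' u hu), Function.update_of_ne (hne' v hv)]
            exact h2 u hu v hv huv) (by
        intro z hz
        rw [Finset.mem_insert, not_or] at hz
        obtain ⟨T', hT', hz'⟩ := h3 z hz.2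
        refine ⟨T', hT', fun v hv hor => hz' v hv ?_⟩
        rcases hor with hor | hor
        · rcases Finset.mem_insert.1 hor with rfl | hor
          · right
            have := hmin z (by simpa using hz.2)
            have := hr z v hv
            omega
          · exact Or.inl hor
        · exact Or.inr hor)
    refine ⟨c, fun v hv => ?_, hc2, hc3⟩
    rw [hc1 v (Finset.mem_insert_of_mem hv), Function.update_of_ne (hne' v hv)]

/-- The system of distinct representatives at one chosen vertex `u`. -/
theorem exists_reps [Fintype V] [DecidableEq V] (G : SimpleGraph V) [DecidableRel G.Adj] (r : V → ℕ)
    (hr : ∀ u v, G.Adj u v → r u ≠ r v)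
    (hpar : ∀ v u w, G.Adj v u → G.Adj v w → r u < r v → r w < r v → u = w)
    (k : ℕ) (x : V) (hx0 : r x = 0) (hxk : k ≤ G.degree x)
    (B : Finset V) (hB : ∀ v, k ≤ G.degree v → ∀ u ∈ B, r v < r u → v ∈ B)
    (f : V → ℕ) (hfk : ∀ v ∈ B, f v < k) (hfi : ∀ u ∈ B, ∀ v ∈ B, f u = f v → u = v)
    (u : V) (hu : u ∈ B) (hd : k ≤ G.degree u) :
    ∃ g : ℕ → V, ∀ i < k, i ≠ f u → (∀ b ∈ B, G.Adj u b → f b ≠ i) →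
      (g i ∉ B ∧ G.Adj u (g i) ∧ r u < r (g i) ∧ (∀ b ∈ B, G.Adj (g i) b → f b ≠ i)) ∧
      ∀ j < k, j ≠ f u → (∀ b ∈ B, G.Adj u b → f b ≠ j) → g i = g j → i = j := by
  set R : Finset ℕ := (Finset.range k).filter
    (fun i => i ≠ f u ∧ ∀ b ∈ B, G.Adj u b → f b ≠ i) with hR
  set P : Finset V := Finset.univ.filter (fun p => p ∉ B ∧ G.Adj u p ∧ r u < r p) with hP
  set N : Finset V := B.filter (fun b => G.Adj u b) with hN
  set L : Finset V := Finset.univ.filter (fun q => q ∉ B ∧ G.Adj u q ∧ r q < r u) with hL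
  have hcR : R.card + N.card + 1 ≤ k := by
    have hNi : (N.image f).card = N.card := by
      apply Finset.card_image_of_injOn
      intro a ha b hb hab
      simp only [hN, Finset.coe_filter, Set.mem_setOf_eq] at ha hb
      exact hfi a ha.1 b hb.1 hab
    have hdis : Disjoint R (N.image f) := by
      rw [Finset.disjoint_left]
      intro i hi hi'
      obtain ⟨b, hb, rfl⟩ := Finset.mem_image.1 hi'
      rw [hN, Finset.mem_filter] at hb
      rw [hR, Finset.mem_filter] at hi
      exact hi.2.2 b hb.1 hb.2 rfl
    have hnot : f u ∉ R ∪ N.image f := by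
      rw [Finset.mem_union, not_or]
      constructor
      · simp [hR]
      · intro h
        obtain ⟨b, hb, hbu⟩ := Finset.mem_image.1 h
        rw [hN, Finset.mem_filter] at hb
        have := hfi b hb.1 u hu hbu
        subst this
        exact G.irrefl hb.2
    have hsub : insert (f u) (R ∪ N.image f) ⊆ Finset.range k := by
      intro i hi
      rw [Finset.mem_insert, Finset.mem_union] at hi
      rcases hi with rfl | hi | hi
      · simpa using hfk u hu
      · exact (Finset.mem_filter.1 hi).1
      · obtain ⟨b, hb, rfl⟩ := Finset.mem_image.1 hi
        simpa using hfk b (Finset.mem_filter.1 hb).1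
    have := Finset.card_le_card hsub
    rw [Finset.card_insert_of_notMem hnot, Finset.card_union_of_disjoint hdis, hNi,
      Finset.card_range] at this
    exact this
  have hcN : G.degree u ≤ P.card + N.card + L.card := by
    rw [← G.card_neighborFinset_eq_degree]
    have hsub : G.neighborFinset u ⊆ (P ∪ N) ∪ L := by
      intro v hv
      rw [mem_neighborFinset] at hv
      have := hr u v hv
      simp only [Finset.mem_union, hP, hN, hL, Finset.mem_filter, Finset.mem_univ, true_and, hv,
        and_true]
      by_cases hvB : v ∈ B
      · simp [hvB]
      · simp only [hvB, not_false_eq_true, true_and]; omega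
    calc _ ≤ _ := Finset.card_le_card hsub
      _ ≤ _ := Finset.card_union_le _ _
      _ ≤ _ := by gcongr; exact Finset.card_union_le _ _
  have hL1 : L.card ≤ 1 := by
    rw [Finset.card_le_one]
    intro a ha b hb
    simp only [hL, Finset.mem_filter, Finset.mem_univ, true_and] at ha hb
    exact hpar u a b ha.2.1 hb.2.1 ha.2.2 hb.2.2
  let t : R → Finset V := fun i => P.filter (fun p => ∀ b ∈ B, G.Adj p b → f b ≠ i)
  have hhall : ∀ s : Finset R, s.card ≤ (s.biUnion t).card := by
    intro s
    by_contra hlt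
    push Not at hlt
    have hsR : s.card ≤ R.card := by
      have := Finset.card_le_univ s
      simpa using this
    obtain ⟨p, hpP, hp⟩ : ∃ p ∈ P, p ∉ s.biUnion t :=
      Finset.exists_mem_notMem_of_card_lt_card (by omega)
    have hpP' : p ∉ B ∧ G.Adj u p ∧ r u < r p := by simpa [hP] using hpP
    have hbad : ∀ p ∈ P, ∀ i : R, p ∉ t i → ∃ b ∈ B, G.Adj p b ∧ f b = i ∧ r p < r b := by
      intro p hpP i hi
      have hpP' : p ∉ B ∧ G.Adj u p ∧ r u < r p := by simpa [hP] using hpP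
      simp only [t, Finset.mem_filter, hpP, true_and, not_forall, not_not] at hi
      obtain ⟨b, hb, hpb, hfb⟩ := hi
      refine ⟨b, hb, hpb, hfb, ?_⟩
      by_contra hle
      have hne := hr p b hpb
      have : b = u := hpar p b u hpb hpP'.2.1.symm (by omega) hpP'.2.2
      subst this
      exact (Finset.mem_filter.1 i.2).2.1 hfb.symm
    have hps : ∀ i ∈ s, p ∉ t i := fun i hi h => hp (Finset.mem_biUnion.2 ⟨i, hi, h⟩)
    obtain ⟨i, hi⟩ : s.Nonempty := by rw [← Finset.card_pos]; omega
    have hsub : P.erase p ⊆ s.biUnion t := by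
      intro p' hp'
      rw [Finset.mem_erase] at hp'
      refine Finset.mem_biUnion.2 ⟨i, hi, ?_⟩
      by_contra hnt
      obtain ⟨b, hb, h1, h2, h3⟩ := hbad p hpP i (hps i hi)
      obtain ⟨b', hb', h1', h2', h3'⟩ := hbad p' hp'.2 i hnt
      have : b = b' := hfi b hb b' hb' (h2.trans h2'.symm)
      subst this
      exact hp'.1 (hpar b p' p h1'.symm h1.symm h3' h3)
    have hcs := Finset.card_le_card hsub
    rw [Finset.card_erase_of_mem hpP] at hcs
    have hsall : s = Finset.univ := by
      rw [← Finset.card_eq_iff_eq_univ]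
      simp only [Fintype.card_coe]
      omega
    have hLpos : 0 < L.card := by omega
    obtain ⟨q, hq⟩ := Finset.card_pos.1 hLpos
    simp only [hL, Finset.mem_filter, Finset.mem_univ, true_and] at hq
    have hxB : x ∈ B := hB x hxk u hu (by omega)
    have hxR : f x ∈ R := by
      rw [hR, Finset.mem_filter, Finset.mem_range]
      refine ⟨hfk x hxB, ?_, ?_⟩
      · intro h
        have := hfi x hxB u hu h
        subst this
        omega
      · intro b hb hub hbx
        have := hfi b hb x hxB hbx
        subst this
        have := hpar u b q hub hq.2.1 (by omega) hq.2.2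
        subst this
        exact hq.1 hb
    obtain ⟨b, hb, h1, h2, h3⟩ := hbad p hpP ⟨f x, hxR⟩ (hps _ (by simp [hsall]))
    have := hfi b hb x hxB h2
    subst this
    omega
  obtain ⟨g, hgi, hg⟩ := (Finset.all_card_le_biUnion_card_iff_exists_injective t).1 hhall
  refine ⟨fun i => if h : i ∈ R then g ⟨i, h⟩ else u, ?_⟩
  have hmem : ∀ i < k, i ≠ f u → (∀ b ∈ B, G.Adj u b → f b ≠ i) → i ∈ R := by
    intro i h1 h2 h3
    rw [hR, Finset.mem_filter, Finset.mem_range]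
    exact ⟨h1, h2, h3⟩
  intro i h1 h2 h3
  have hi := hmem i h1 h2 h3
  simp only [hi, dite_true]
  constructor
  · have h := Finset.mem_filter.1 (hg ⟨i, hi⟩)
    have h' := (Finset.mem_filter.1 h.1).2
    exact ⟨h'.1, h'.2.1, h'.2.2, h.2⟩
  · intro j h1' h2' h3' heq
    have hj := hmem j h1' h2' h3'
    simp only [hj, dite_true] at heq
    have := hgi heq
    simpa using this

theorem exists_bColoring [Fintype V] [DecidableEq V] (G : SimpleGraph V) [DecidableRel G.Adj]
    (hG : G.IsAcyclic) (k : ℕ) (hk : 2 ≤ k)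
    (hD : k ≤ (Finset.univ.filter (fun v => k ≤ G.degree v)).card) :
    ∃ c : V → ℕ, IsBColoring G k c := by
  obtain ⟨x, hx⟩ : (Finset.univ.filter (fun v => k ≤ G.degree v)).Nonempty := by
    rw [← Finset.card_pos]; omega
  rw [Finset.mem_filter] at hx
  obtain ⟨r, hx0, hr, hpar⟩ := exists_rank G hG x
  obtain ⟨B, hBD, hBc, hB'⟩ := exists_lowest _ r k hD
  have hBd : ∀ u ∈ B, k ≤ G.degree u := fun u hu => (Finset.mem_filter.1 (hBD hu)).2
  have hB : ∀ v, k ≤ G.degree v → ∀ u ∈ B, r v < r u → v ∈ B :=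
    fun v hv => hB' v (by simpa using hv)
  obtain ⟨f, hfk, hfi, hfs⟩ : ∃ f : V → ℕ, (∀ v ∈ B, f v < k) ∧
      (∀ u ∈ B, ∀ v ∈ B, f u = f v → u = v) ∧ ∀ i < k, ∃ u ∈ B, f u = i := by
    let e := B.equivFinOfCardEq hBc
    refine ⟨fun v => if h : v ∈ B then (e ⟨v, h⟩ : ℕ) else 0, ?_, ?_, ?_⟩
    · intro v hv; simp [hv]
    · intro u hu v hv h
      simp only [hu, hv, dite_true] at h
      have := e.injective (Fin.ext h)
      simpa using this
    · intro i hi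
      refine ⟨e.symm ⟨i, hi⟩, (e.symm ⟨i, hi⟩).2, ?_⟩
      simp
  have hreps := fun u (hu : u ∈ B) =>
    exists_reps G r hr hpar k x hx0 hx.2 B hB f hfk hfi u hu (hBd u hu)
  choose! g hg using hreps
  let Q : V → ℕ → V → Prop := fun u i p => u ∈ B ∧ i < k ∧ i ≠ f u ∧
    (∀ b ∈ B, G.Adj u b → f b ≠ i) ∧ g u i = p
  have hQ : ∀ u i p, Q u i p → p ∉ B ∧ G.Adj u p ∧ r u < r p ∧ (∀ b ∈ B, G.Adj p b → f b ≠ i) := by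
    rintro u i p ⟨h1, h2, h3, h4, rfl⟩
    exact (hg u h1 i h2 h3 h4).1
  have hQu : ∀ u i u' i' p, Q u i p → Q u' i' p → i = i' := by
    intro u i u' i' p h h'
    have a := hQ _ _ _ h
    have a' := hQ _ _ _ h'
    have : u = u' := hpar p u u' a.2.1.symm a'.2.1.symm a.2.2.1 a'.2.2.1
    subst this
    obtain ⟨h1, h2, h3, h4, h5⟩ := h
    obtain ⟨h1', h2', h3', h4', h5'⟩ := h'
    exact (hg u h1 i h2 h3 h4).2 i' h2' h3' h4' (h5.trans h5'.symm)
  classical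
  let c₀ : V → ℕ := fun v => if v ∈ B then f v else
    if h : ∃ i u, Q u i v then h.choose else 0
  have hc₀B : ∀ v ∈ B, c₀ v = f v := fun v hv => by simp [c₀, hv]
  have hc₀Q : ∀ u i p, Q u i p → c₀ p = i := by
    intro u i p h
    have hex : ∃ i u, Q u i p := ⟨i, u, h⟩
    have hpB := (hQ _ _ _ h).1
    have : c₀ p = hex.choose := by simp [c₀, hpB, hex]
    rw [this]
    obtain ⟨u', hu'⟩ := hex.choose_spec
    exact hQu _ _ _ _ _ hu' h
  let S : Finset V := Finset.univ.filter (fun v => v ∈ B ∨ ∃ i u, Q u i v)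
  have hS : ∀ v, v ∈ S ↔ v ∈ B ∨ ∃ i u, Q u i v := fun v => by simp [S]
  -- neighbours
  obtain ⟨c, hc, hck, hcp⟩ := extend_coloring_s13 G r hr k _ S c₀ rfl (by
      intro v hv
      rcases (hS v).1 hv with hv | ⟨i, u, h⟩
      · rw [hc₀B v hv]; exact hfk v hv
      · rw [hc₀Q _ _ _ h]; exact h.2.1) (by
      intro v hv w hw hvw
      rcases (hS v).1 hv with hv | ⟨i, u, h⟩ <;> rcases (hS w).1 hw with hw | ⟨j, u', h'⟩
      · rw [hc₀B v hv, hc₀B w hw]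
        intro he
        have := hfi v hv w hw he
        subst this
        exact G.irrefl hvw
      · rw [hc₀B v hv, hc₀Q _ _ _ h']
        exact (hQ _ _ _ h').2.2.2 v hv hvw.symm
      · rw [hc₀B w hw, hc₀Q _ _ _ h]
        exact ((hQ _ _ _ h).2.2.2 w hw hvw).symm
      · exfalso
        have a := hQ _ _ _ h
        have a' := hQ _ _ _ h'
        rcases lt_or_gt_of_ne (hr v w hvw) with hlt | hlt
        · have := hpar w v u' hvw.symm a'.2.1.symm hlt a'.2.2.1
          subst this
          exact a.1 h'.1
        · have := hpar v w u hvw a.2.1.symm hlt a.2.2.1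
          subst this
          exact a'.1 h.1) (by
      intro w hw
      have hwB : w ∉ B := fun h => hw ((hS w).2 (Or.inl h))
      by_cases hd : k ≤ G.degree w
      · refine ⟨Finset.univ.filter (fun v => G.Adj w v ∧ r v < r w), ?_, ?_⟩
        · refine lt_of_le_of_lt (Finset.card_le_one.2 ?_) hk
          intro a ha b hb
          simp only [Finset.mem_filter, Finset.mem_univ, true_and] at ha hb
          exact hpar w a b ha.1 hb.1 ha.2 hb.2
        · intro v hv hor
          simp only [Finset.mem_filter, Finset.mem_univ, true_and, hv]
          rcases hor with hor | hor
          · by_contra hle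
            have hlt : r w < r v := by have := hr w v hv; omega
            rcases (hS v).1 hor with hvB | ⟨i, u, h⟩
            · exact hwB (hB w hd v hvB hlt)
            · have a := hQ _ _ _ h
              have := hpar v w u hv.symm a.2.1.symm hlt a.2.2.1
              subst this
              exact hwB h.1
          · exact hor
      · refine ⟨G.neighborFinset w, ?_, ?_⟩
        · rw [G.card_neighborFinset_eq_degree]; omega
        · intro v hv _
          simpa using hv)
  have hcB : ∀ v ∈ B, c v = f v := fun v hv => by
    rw [hc v ((hS v).2 (Or.inl hv)), hc₀B v hv]
  refine ⟨c, ⟨hck, hcp, ?_⟩, ?_⟩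
  · intro i hi
    obtain ⟨u, hu, rfl⟩ := hfs i hi
    exact ⟨u, hcB u hu⟩
  · intro i hi
    obtain ⟨u, hu, rfl⟩ := hfs i hi
    refine ⟨u, hcB u hu, ?_⟩
    intro j hj hju
    rw [hcB u hu] at hju
    by_cases h : ∀ b ∈ B, G.Adj u b → f b ≠ j
    · have q : Q u j (g u j) := ⟨hu, hj, hju, h, rfl⟩
      refine ⟨g u j, (hQ _ _ _ q).2.1, ?_⟩
      rw [hc _ ((hS _).2 (Or.inr ⟨j, u, q⟩)), hc₀Q _ _ _ q]
    · push Not at h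
      obtain ⟨b, hb, hub, rfl⟩ := h
      exact ⟨b, hub, hcB b hb⟩

/-- Forests are b-continuous. -/
theorem bContinuous_of_isAcyclic [Fintype V] (G : SimpleGraph V) (hG : G.IsAcyclic) (k : ℕ)
    (h1 : G.chromaticNumber ≤ (k : ℕ∞)) (h2 : k ≤ bChrom G) :
    ∃ c : V → ℕ, IsBColoring G k c := by
  classical
  have hcol : G.Colorable k := chromaticNumber_le_iff_colorable.1 h1
  obtain ⟨C⟩ := hcol
  rcases Nat.eq_zero_or_pos k with rfl | hpos
  · exact ⟨fun _ => 0, ⟨fun v => (C v).elim0, fun u => (C u).elim0, by simp⟩, by simp⟩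
  have hbdd : BddAbove {k | ∃ c : V → ℕ, IsBColoring G k c} := by
    refine ⟨Fintype.card V, ?_⟩
    rintro n ⟨c, hc, -⟩
    have hsub : Finset.range n ⊆ Finset.univ.image c := by
      intro i hi
      obtain ⟨v, hv⟩ := hc.2.2 i (Finset.mem_range.1 hi)
      exact Finset.mem_image.2 ⟨v, Finset.mem_univ v, hv⟩
    have := Finset.card_le_card hsub
    rw [Finset.card_range] at this
    exact this.trans (Finset.card_image_le)
  have hne : {k | ∃ c : V → ℕ, IsBColoring G k c}.Nonempty := by
    by_contra h
    rw [Set.not_nonempty_iff_eq_empty] at h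
    rw [bChrom, h] at h2
    simp at h2
    omega
  obtain ⟨c, hc⟩ : ∃ c : V → ℕ, IsBColoring G (bChrom G) c := Nat.sSup_mem hne hbdd
  rcases h2.eq_or_lt with heq | hlt
  · rw [heq]; exact ⟨c, hc⟩
  generalize bChrom G = K at hc hlt
  have hk2 : 2 ≤ k := by
    by_contra hk
    have hk1 : k = 1 := by omega
    subst hk1
    obtain ⟨u, hu, hb⟩ := hc.2 0 (by omega)
    obtain ⟨w, hw, -⟩ := hb 1 hlt (by omega)
    exact C.valid hw (Subsingleton.elim _ _)
  apply exists_bColoring G hG k hk2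
  have hdeg : ∀ u, IsBVertex G K c u → k ≤ G.degree u := by
    intro u hu
    have hsub : (Finset.range K).erase (c u) ⊆ (G.neighborFinset u).image c := by
      intro j hj
      rw [Finset.mem_erase, Finset.mem_range] at hj
      obtain ⟨w, hw, rfl⟩ := hu j hj.2 hj.1
      exact Finset.mem_image.2 ⟨w, by simpa using hw, rfl⟩
    have h3 := Finset.card_le_card hsub
    rw [Finset.card_erase_of_mem (Finset.mem_range.2 (hc.1.1 u)), Finset.card_range] at h3
    have h4 : _ ≤ (G.neighborFinset u).card := Finset.card_image_le (f := c)
    rw [G.card_neighborFinset_eq_degree] at h4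
    omega
  have hsub : Finset.range K ⊆
      (Finset.univ.filter (fun v => k ≤ G.degree v)).image c := by
    intro i hi
    obtain ⟨u, rfl, hb⟩ := hc.2 i (Finset.mem_range.1 hi)
    exact Finset.mem_image.2 ⟨u, by simpa using hdeg u hb, rfl⟩
  have h3 := (Finset.card_le_card hsub).trans Finset.card_image_le
  rw [Finset.card_range] at h3
  omega
end
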